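/- arXiv:2605.01590 — 2 statements merged into one kernel-verified Lean document; each statement's English description precedes it below -/
import Mathlib

section
/- Let K = ℚ(√−2437) be the imaginary quadratic field of discriminant d = −9748. Then the 3-primary part of the ideal class group of the ring of integers of K (equivalently, its Sylow 3-subgroup) is isomorphic to (ℤ/3ℤ) × (ℤ/3ℤ); in particular, K has an elementary bicyclic 3-class group. -/
open NumberField

theorem sylow_three_mulEquiv_of_card_lt {G : Type*} [CommGroup G] [Finite G]
    (hG : Nat.card G < 27) {a b : G} (ha : a ^ 3 = 1) (hb : b ^ 3 = 1) (ha1 : a ≠ 1) (hb1 : b ≠ 1)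
    (hab : a * b ≠ 1) (hne : a ≠ b) (P : Sylow 3 G) :
    Nonempty (↥(P : Subgroup G) ≃* Multiplicative (ZMod 3 × ZMod 3)) := by
  have : Fact (Nat.Prime 3) := ⟨Nat.prime_three⟩
  let powHom (g : G) (hg : g ^ 3 = 1) : ZMod 3 →+ Additive G :=
    ZMod.lift 3 ⟨zmultiplesHom (Additive G) (Additive.ofMul g), by
      rw [zmultiplesHom_apply, natCast_zsmul, ← ofMul_pow, hg, ofMul_one]⟩
  have powHom_apply (g : G) (hg : g ^ 3 = 1) (k : ℕ) :
      powHom g hg (k : ZMod 3) = Additive.ofMul (g ^ k) := by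
    rw [← Int.cast_natCast, ZMod.lift_coe, zmultiplesHom_apply, natCast_zsmul, ofMul_pow]
  let f : Multiplicative (ZMod 3 × ZMod 3) →* G :=
    AddMonoidHom.toMultiplicativeLeft ((powHom a ha).coprod (powHom b hb))
  have f_apply (i j : ℕ) : f (Multiplicative.ofAdd ((i : ZMod 3), (j : ZMod 3))) = a ^ i * b ^ j := by
    simp [f, powHom_apply]
  have hinj : Function.Injective f := by
    rw [injective_iff_map_eq_one]
    intro x hx
    obtain ⟨⟨i, j⟩, rfl⟩ := Multiplicative.ofAdd.surjective x
    obtain ⟨i, hi, rfl⟩ : ∃ k : ℕ, k < 3 ∧ (k : ZMod 3) = i := ⟨i.val, i.val_lt, by simp⟩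
    obtain ⟨j, hj, rfl⟩ : ∃ k : ℕ, k < 3 ∧ (k : ZMod 3) = j := ⟨j.val, j.val_lt, by simp⟩
    rw [f_apply] at hx
    suffices i = 0 ∧ j = 0 by simp [this.1, this.2]
    have key : ∀ {c d : G}, c ^ 3 = 1 → c ^ 2 * d = 1 → c = d := by
      intro c d hc hd
      rw [pow_succ] at hc
      exact mul_left_cancel (hc.trans hd.symm)
    interval_cases i <;> interval_cases j <;> try simp only [pow_zero, pow_one, one_mul, mul_one] at hx
    · simp
    · exact absurd hx hb1
    · exact absurd (key (d := 1) hb (by simpa using hx)) hb1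
    · exact absurd hx ha1
    · exact absurd hx hab
    · exact absurd (key hb (by rwa [mul_comm])) hne.symm
    · exact absurd (key (d := 1) ha (by simpa using hx)) ha1
    · exact absurd (key ha hx) hne
    · refine absurd ?_ hab
      have : (a * b) ^ 3 = 1 := by rw [mul_pow, ha, hb, one_mul]
      rw [← mul_pow] at hx
      exact key (d := 1) this (by simpa using hx)
  have hcard : Nat.card f.range = 9 := by
    rw [← Nat.card_congr (MonoidHom.ofInjective hinj).toEquiv]
    simp [Nat.card_eq_fintype_card, ZMod.card]
  have hle : f.range ≤ (P : Subgroup G) :=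
    (IsPGroup.of_card (n := 2) (by rw [hcard]; norm_num)).le_sylow_of_normal P
  obtain ⟨k, hk⟩ := P.isPGroup'.exists_card_eq
  have hPle : Nat.card (P : Subgroup G) ≤ Nat.card f.range := by
    have h1 : Nat.card (P : Subgroup G) < 3 ^ 3 := (Subgroup.card_le_card_group _).trans_lt hG
    rw [hk] at h1 ⊢
    rw [hcard]
    have := (Nat.pow_lt_pow_iff_right (by norm_num)).1 h1
    exact (Nat.pow_le_pow_right (by norm_num) (Nat.le_of_lt_succ this)).trans (by norm_num)
  have heq : f.range = P := Subgroup.eq_of_le_of_card_ge hle hPle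
  exact ⟨((MonoidHom.ofInjective hinj).trans (MulEquiv.subgroupCongr heq)).symm⟩

/-- The ideal `(n, x + w)`. -/
def quadIdeal {R : Type*} [CommRing R] (w : R) (n x : ℤ) : Ideal R :=
  Ideal.span {(n : R), (x : R) + w}

namespace quadIdeal

section CommRing

variable {R : Type*} [CommRing R] {w : R} {D : ℤ}

theorem mul_eq (hw : w ^ 2 = -(D : R)) {n m x : ℤ} (hdvd : n * m ∣ x ^ 2 + D)
    {r s t : ℤ} (h : r * n + s * m + t * (2 * x) = 1) :
    quadIdeal w n x * quadIdeal w m x = quadIdeal w (n * m) x := by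
  obtain ⟨k, hk⟩ := hdvd
  have hk' : (x : R) ^ 2 + D = n * m * k := by exact_mod_cast congrArg (Int.cast : ℤ → R) hk
  have h' : (r : R) * n + s * m + t * (2 * x) = 1 := by
    exact_mod_cast congrArg (Int.cast : ℤ → R) h
  simp only [quadIdeal]
  apply le_antisymm
  · rw [Ideal.span_mul_span', Ideal.span_le]
    rintro _ ⟨p, hp, q, hq, rfl⟩
    simp only [SetLike.mem_coe, Ideal.mem_span_pair]
    rcases hp with rfl | rfl <;> rcases hq with rfl | rfl
    · exact ⟨1, 0, by push_cast; ring⟩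
    · exact ⟨0, n, by ring⟩
    · exact ⟨0, m, by ring⟩
    · refine ⟨-k, 2 * x, ?_⟩
      push_cast
      linear_combination hk' - hw
  · have hm : ∀ p ∈ ({(n : R), (x : R) + w} : Set R), ∀ q ∈ ({(m : R), (x : R) + w} : Set R),
        p * q ∈ Ideal.span {(n : R), (x : R) + w} * Ideal.span {(m : R), (x : R) + w} :=
      fun p hp q hq ↦ Ideal.mul_mem_mul (Ideal.subset_span hp) (Ideal.subset_span hq)
    have h1 := hm n (by simp) m (by simp)
    have h2 := hm n (by simp) (x + w) (by simp)
    have h3 := hm (x + w) (by simp) m (by simp)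
    have h4 := hm (x + w) (by simp) (x + w) (by simp)
    rw [Ideal.span_le]
    rintro p (rfl | rfl)
    · simpa using h1
    · have h5 := add_mem (add_mem (Ideal.mul_mem_left _ (r : R) h2) (Ideal.mul_mem_left _ (s : R) h3))
        (Ideal.mul_mem_left _ (t : R) (add_mem h4 (Ideal.mul_mem_left _ (k : R) h1)))
      rw [SetLike.mem_coe]
      convert h5 using 1
      linear_combination (-(x : R) - w) * h' + t * hk' - t * hw

theorem span_singleton_mul (c : R) (n x : ℤ) :
    Ideal.span {c} * quadIdeal w n x = Ideal.span {c * n, c * (x + w)} := by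
  rw [quadIdeal, Ideal.span_mul_span', Set.singleton_mul, Set.image_pair]

theorem abs_left (n x : ℤ) : quadIdeal w |n| x = quadIdeal w n x := by
  rcases abs_choice n with h | h <;> rw [h]
  rw [quadIdeal, quadIdeal, Ideal.span_insert, Ideal.span_insert, Int.cast_neg,
    Ideal.span_singleton_neg]

theorem span_mul_eq_span_mul (hw : w ^ 2 = -(D : R)) {n m x : ℤ} (h : n * m = x ^ 2 + D) :
    Ideal.span {(x : R) - w} * quadIdeal w n x = Ideal.span {(n : R)} * quadIdeal w m (-x) := by
  have h' : (n : R) * m = x ^ 2 + D := by exact_mod_cast congrArg (Int.cast : ℤ → R) h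
  rw [span_singleton_mul, span_singleton_mul, Ideal.span_pair_comm,
    show ((x : R) - w) * (x + w) = n * m by linear_combination -hw - h',
    show ((x : R) - w) * n = -(n * ((-x : ℤ) + w)) by push_cast; ring,
    Ideal.span_insert, Ideal.span_insert, Ideal.span_singleton_neg]

theorem mul_neg_eq (hw : w ^ 2 = -(D : R)) {n m x : ℤ} (hm : n * m = x ^ 2 + D)
    {r s t : ℤ} (h : r * n + s * m + t * (2 * x) = 1) :
    quadIdeal w n x * quadIdeal w n (-x) = Ideal.span {(n : R)} := by
  have hm' : (n : R) * m = x ^ 2 + D := by exact_mod_cast congrArg (Int.cast : ℤ → R) hm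
  have h' : (r : R) * n + s * m + t * (2 * x) = 1 := by
    exact_mod_cast congrArg (Int.cast : ℤ → R) h
  simp only [quadIdeal]
  apply le_antisymm
  · rw [Ideal.span_mul_span', Ideal.span_le]
    rintro _ ⟨p, hp, q, hq, rfl⟩
    simp only [SetLike.mem_coe, Ideal.mem_span_singleton']
    rcases hp with rfl | rfl <;> rcases hq with rfl | rfl
    · exact ⟨n, by ring⟩
    · exact ⟨((-x : ℤ) : R) + w, by ring⟩
    · exact ⟨x + w, by ring⟩
    · refine ⟨-m, ?_⟩
      push_cast
      linear_combination -hm' - hw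
  · rw [Ideal.span_singleton_le_iff_mem]
    have hmem : ∀ p ∈ ({(n : R), (x : R) + w} : Set R),
        ∀ q ∈ ({(n : R), ((-x : ℤ) : R) + w} : Set R),
        p * q ∈ Ideal.span {(n : R), (x : R) + w} * Ideal.span {(n : R), ((-x : ℤ) : R) + w} :=
      fun p hp q hq ↦ Ideal.mul_mem_mul (Ideal.subset_span hp) (Ideal.subset_span hq)
    have h1 := hmem n (by simp) n (by simp)
    have h2 := hmem n (by simp) ((-x : ℤ) + w) (by simp)
    have h3 := hmem (x + w) (by simp) n (by simp)
    have h4 := hmem (x + w) (by simp) ((-x : ℤ) + w) (by simp)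
    have h5 := add_mem (sub_mem (Ideal.mul_mem_left _ (r : R) h1) (Ideal.mul_mem_left _ (s : R) h4))
        (Ideal.mul_mem_left _ (t : R) (sub_mem h3 h2))
    convert h5 using 1
    push_cast
    linear_combination -(n : R) * h' + s * hm' + s * hw

theorem add_mul_self (n x k : ℤ) : quadIdeal w n (x + n * k) = quadIdeal w n x := by
  simp only [quadIdeal]
  apply le_antisymm <;> rw [Ideal.span_le] <;> rintro p (rfl | rfl) <;>
    simp only [SetLike.mem_coe, Ideal.mem_span_pair]
  · exact ⟨1, 0, by ring⟩
  · exact ⟨k, 1, by push_cast; ring⟩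
  · exact ⟨1, 0, by ring⟩
  · exact ⟨-k, 1, by push_cast; ring⟩

theorem congr_right {n x y : ℤ} (h : n ∣ y - x) : quadIdeal w n y = quadIdeal w n x := by
  obtain ⟨k, hk⟩ := h
  rw [← add_mul_self n x k, ← hk, add_sub_cancel]

/-- `c + d * w` is the quotient of `x + w` by `u + v * w`. -/
theorem eq_span_singleton (hw : w ^ 2 = -(D : R)) {u v x c d : ℤ}
    (h₁ : u * c - D * (v * d) = x) (h₂ : u * d + v * c = 1) :
    quadIdeal w (u ^ 2 + D * v ^ 2) x = Ideal.span {(u : R) + v * w} := by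
  have h₁' : (u : R) * c - D * (v * d) = x := by exact_mod_cast congrArg (Int.cast : ℤ → R) h₁
  have h₂' : (u : R) * d + v * c = 1 := by exact_mod_cast congrArg (Int.cast : ℤ → R) h₂
  simp only [quadIdeal]
  apply le_antisymm
  · rw [Ideal.span_le]
    rintro p (rfl | rfl) <;> simp only [SetLike.mem_coe, Ideal.mem_span_singleton']
    · exact ⟨u - v * w, by push_cast; linear_combination -(v : R) ^ 2 * hw⟩
    · exact ⟨c + d * w, by linear_combination h₁' + w * h₂' + v * d * hw⟩
  · rw [Ideal.span_singleton_le_iff_mem, Ideal.mem_span_pair]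
    refine ⟨d, v, ?_⟩
    push_cast
    linear_combination -(v : R) * h₁' + u * h₂'

end CommRing

section Basis

variable {R : Type*} [CommRing R] {w : R} {D : ℤ}

theorem ne_bot [CharZero R] {n x : ℤ} (hn : n ≠ 0) : quadIdeal w n x ≠ ⊥ := by
  intro h
  have : (n : R) ∈ quadIdeal w n x := Ideal.subset_span (by simp)
  rw [h, Ideal.mem_bot] at this
  exact hn (by exact_mod_cast this)

theorem not_isPrincipal (hw : w ^ 2 = -(D : R)) (hspan : ∀ r : R, ∃ a b : ℤ, r = a + b * w)
    (hind : ∀ a b : ℤ, (a : R) + b * w = 0 → a = 0 ∧ b = 0) {n x : ℤ} (hn : 1 < n)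
    (hdvd : n ∣ x ^ 2 + D) (hgcd : (Int.gcd (n ^ 2) (x ^ 2 + D) : ℤ) < D) :
    ¬ (quadIdeal w n x).IsPrincipal := by
  rintro ⟨g, hg⟩
  have hD : 0 < D := by omega
  obtain ⟨u, v, rfl⟩ := hspan g
  rw [Ideal.submodule_span_eq] at hg
  have norm_dvd : ∀ y z : ℤ, (y : R) + z * w ∈ quadIdeal w n x →
      ∃ c d : ℤ, u * c - D * (v * d) = y ∧ u * d + v * c = z := by
    intro y z hy
    rw [hg, Ideal.mem_span_singleton'] at hy
    obtain ⟨q, hq⟩ := hy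
    obtain ⟨c, d, rfl⟩ := hspan q
    have := hind (u * c - D * (v * d) - y) (u * d + v * c - z)
      (by push_cast; linear_combination hq - v * d * hw)
    exact ⟨c, d, by linarith [this.1], by linarith [this.2]⟩
  obtain ⟨c, d, h1, h2⟩ := norm_dvd n 0 (Ideal.subset_span (by simp))
  obtain ⟨c', d', h3, h4⟩ := norm_dvd x 1 (Ideal.subset_span (by simp))
  have hN : u ^ 2 + D * v ^ 2 ∣ Int.gcd (n ^ 2) (x ^ 2 + D) := by
    refine Int.dvd_coe_gcd ⟨c ^ 2 + D * d ^ 2, ?_⟩ ⟨c' ^ 2 + D * d' ^ 2, ?_⟩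
    · linear_combination -(u * c - D * (v * d) + n) * h1 - D * (u * d + v * c) * h2
    · linear_combination -(u * c' - D * (v * d') + x) * h3 - D * (u * d' + v * c' + 1) * h4
  have hpos : (0 : ℤ) < Int.gcd (n ^ 2) (x ^ 2 + D) := by
    have : 0 < Int.gcd (n ^ 2) (x ^ 2 + D) := Int.gcd_pos_of_ne_zero_left _ (by positivity)
    exact_mod_cast this
  have hlt := (Int.le_of_dvd hpos hN).trans_lt hgcd
  have hv : v = 0 := by
    by_contra hv
    have : 1 ≤ v ^ 2 := by have := sq_nonneg v; have : v ^ 2 ≠ 0 := pow_ne_zero 2 hv; omega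
    nlinarith [sq_nonneg u]
  subst hv
  have hone : (1 : R) ∈ quadIdeal w n x := by
    rw [hg, Ideal.mem_span_singleton']
    refine ⟨d', ?_⟩
    have : (u : R) * d' + 0 * c' = 1 := by exact_mod_cast congrArg (Int.cast : ℤ → R) h4
    push_cast
    linear_combination this
  rw [quadIdeal, Ideal.mem_span_pair] at hone
  obtain ⟨p, q, hpq⟩ := hone
  obtain ⟨p, p', rfl⟩ := hspan p
  obtain ⟨q, q', rfl⟩ := hspan q
  have := hind (p * n + q * x - D * q' - 1) (p' * n + q + x * q')
    (by push_cast; linear_combination hpq - q' * hw)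
  obtain ⟨k, hk⟩ := hdvd
  have h1 : n * (p - x * p' - q' * k) = 1 := by
    linear_combination this.1 - x * this.2 + q' * hk
  have := Int.le_of_dvd one_pos ⟨_, h1.symm⟩
  omega

theorem exists_eq_span_mul
    (hD : 0 < D) (hw : w ^ 2 = -(D : R)) (hspan : ∀ r : R, ∃ a b : ℤ, r = a + b * w) {I : Ideal R} (hI : I ≠ ⊥) :
    ∃ c n x : ℤ, c ≠ 0 ∧ 0 < n ∧ n ∣ x ^ 2 + D ∧
      I = Ideal.span {(c : R)} * quadIdeal w n x := by
  let B : Ideal ℤ :=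
    { carrier := {b | ∃ a : ℤ, (a : R) + b * w ∈ I}
      zero_mem' := ⟨0, by simp⟩
      add_mem' := by
        rintro b b' ⟨a, ha⟩ ⟨a', ha'⟩
        refine ⟨a + a', ?_⟩
        convert add_mem ha ha' using 1
        push_cast
        ring
      smul_mem' := by
        rintro k b ⟨a, ha⟩
        refine ⟨k * a, ?_⟩
        convert I.mul_mem_left (k : R) ha using 1
        push_cast [smul_eq_mul]
        ring }
  obtain ⟨c, hc⟩ := (IsPrincipalIdealRing.principal B).principal
  obtain ⟨a₀, ha₀⟩ := (IsPrincipalIdealRing.principal (I.comap (Int.castRingHom R))).principal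
  rw [Ideal.submodule_span_eq] at hc ha₀
  have hB : ∀ a b : ℤ, (a : R) + b * w ∈ I → c ∣ b := fun a b h ↦ by
    rw [← Ideal.mem_span_singleton, ← hc]
    exact ⟨a, h⟩
  have hA : ∀ a : ℤ, (a : R) ∈ I ↔ a₀ ∣ a := fun a ↦ by
    rw [← Ideal.mem_span_singleton, ← ha₀]
    simp
  obtain ⟨e, he⟩ : c ∈ B := hc ▸ Ideal.mem_span_singleton_self c
  obtain ⟨x, rfl⟩ : c ∣ e := by
    refine hB (-D * c) e ?_
    convert I.mul_mem_left w he using 1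
    push_cast
    linear_combination -(c : R) * hw
  have hc0 : c ≠ 0 := by
    rintro rfl
    obtain ⟨r, hr, hr0⟩ := Submodule.exists_mem_ne_zero_of_ne_bot hI
    obtain ⟨a, b, rfl⟩ := hspan r
    have hb := zero_dvd_iff.1 (hB a b hr)
    have ha := zero_dvd_iff.1 (hB (-D * b) a (by
      convert I.mul_mem_left w hr using 1
      push_cast
      linear_combination -(b : R) * hw))
    simp [ha, hb] at hr0
  obtain ⟨n, rfl⟩ : c ∣ a₀ := by
    refine hB 0 a₀ ?_
    convert I.mul_mem_left w ((hA a₀).2 dvd_rfl) using 1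
    push_cast
    ring
  have hn : n ∣ x ^ 2 + D := by
    rw [← mul_dvd_mul_iff_left hc0, ← hA]
    convert I.mul_mem_left ((x : R) - w) he using 1
    push_cast
    linear_combination (c : R) * hw
  have hn0 : n ≠ 0 := by
    rintro rfl
    have := zero_dvd_iff.1 hn
    nlinarith [sq_nonneg x]
  have hcn : (c : R) * n ∈ I := by exact_mod_cast (hA _).2 dvd_rfl
  refine ⟨c, |n|, x, hc0, abs_pos.2 hn0, (abs_dvd _ _).2 hn, ?_⟩
  rw [abs_left, span_singleton_mul]
  apply le_antisymm
  · intro r hr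
    obtain ⟨a, b, rfl⟩ := hspan r
    obtain ⟨k, rfl⟩ := hB a b hr
    have hak : ((a - k * (c * x) : ℤ) : R) ∈ I := by
      convert sub_mem hr (I.mul_mem_left (k : R) he) using 1
      push_cast
      ring
    obtain ⟨l, hl⟩ := (hA _).1 hak
    have hl' : (a : R) - k * (c * x) = c * n * l := by
      exact_mod_cast congrArg (Int.cast : ℤ → R) hl
    rw [Ideal.mem_span_pair]
    refine ⟨l, k, ?_⟩
    push_cast
    linear_combination -hl'
  · rw [Ideal.span_le]
    rintro p (rfl | rfl)
    · exact hcn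
    · rw [SetLike.mem_coe]
      convert he using 1
      push_cast
      ring

theorem exists_reduced [IsDomain R] [CharZero R]
    (hD : 0 < D) (hw : w ^ 2 = -(D : R)) (hind : ∀ a b : ℤ, (a : R) + b * w = 0 → a = 0 ∧ b = 0)
    {n x : ℤ} (hn : 0 < n) (hdvd : n ∣ x ^ 2 + D) :
    ∃ m y : ℤ, 0 < m ∧ m ∣ y ^ 2 + D ∧ 2 * |y| ≤ m ∧ m ^ 2 ≤ y ^ 2 + D ∧
      ∃ p q : R, p ≠ 0 ∧ q ≠ 0 ∧
        Ideal.span {p} * quadIdeal w n x = Ideal.span {q} * quadIdeal w m y := by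
  induction hN : n.toNat using Nat.strong_induction_on generalizing n x with
  | _ N ih =>
    obtain ⟨y, hyx, hy⟩ : ∃ y : ℤ, n ∣ x - y ∧ 2 * |y| ≤ n := by
      have h0 := Int.emod_nonneg x hn.ne'
      have h1 := Int.emod_lt_of_pos x hn
      have h2 : n ∣ x - x % n := Int.dvd_self_sub_emod
      by_cases h : 2 * (x % n) ≤ n
      · exact ⟨x % n, h2, by rwa [abs_of_nonneg h0]⟩
      · refine ⟨x % n - n, ?_, by rw [abs_of_neg (by omega)]; omega⟩
        rw [← sub_add]
        exact h2.add dvd_rfl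
    rw [congr_right (y := x) hyx]
    have hdvd' : n ∣ y ^ 2 + D := by
      have h3 : n ∣ (x - y) * (x + y) := hyx.mul_right _
      rw [show y ^ 2 + D = x ^ 2 + D - (x - y) * (x + y) by ring]
      exact dvd_sub hdvd h3
    by_cases hle : n ^ 2 ≤ y ^ 2 + D
    · exact ⟨n, y, hn, hdvd', hy, hle, 1, 1, one_ne_zero, one_ne_zero, rfl⟩
    obtain ⟨m, hm⟩ := hdvd'
    have hm0 : 0 < m := by
      have : 0 < n * m := by rw [← hm]; positivity
      exact pos_of_mul_pos_right this hn.le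
    have hmn : m < n := by
      rw [hm, not_le, sq] at hle
      exact lt_of_mul_lt_mul_left hle hn.le
    obtain ⟨m', y', h1, h2, h3, h4, p, q, hp, hq, hpq⟩ :=
      ih m.toNat (by omega) hm0 (x := -y) ⟨n, by rw [neg_sq, hm, mul_comm]⟩ rfl
    refine ⟨m', y', h1, h2, h3, h4, p * (y - w), q * n, ?_, ?_, ?_⟩
    · refine mul_ne_zero hp fun h ↦ ?_
      have := (hind y (-1) (by push_cast; linear_combination h)).2
      omega
    · exact mul_ne_zero hq (by exact_mod_cast hn.ne')
    · rw [← Ideal.span_singleton_mul_span_singleton, ← Ideal.span_singleton_mul_span_singleton,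
        mul_assoc, span_mul_eq_span_mul hw hm.symm, mul_left_comm, hpq, ← mul_assoc,
        mul_comm (Ideal.span {(n : R)})]

theorem exists_reduced_mk0_eq [IsDedekindDomain R] [CharZero R]
    (hD : 0 < D) (hw : w ^ 2 = -(D : R)) (hspan : ∀ r : R, ∃ a b : ℤ, r = a + b * w)
    (hind : ∀ a b : ℤ, (a : R) + b * w = 0 → a = 0 ∧ b = 0) (C : ClassGroup R) :
    ∃ (n x : ℤ) (hn : 0 < n), n ∣ x ^ 2 + D ∧ 2 * |x| ≤ n ∧ n ^ 2 ≤ x ^ 2 + D ∧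
      ClassGroup.mk0 ⟨quadIdeal w n x, mem_nonZeroDivisors_of_ne_zero (ne_bot hn.ne')⟩ = C := by
  obtain ⟨I, rfl⟩ := ClassGroup.mk0_surjective C
  obtain ⟨c, n, x, hc, hn, hdvd, hI⟩ :=
    exists_eq_span_mul hD hw hspan (nonZeroDivisors.coe_ne_zero I)
  obtain ⟨m, y, hm, h1, h2, h3, p, q, hp, hq, hpq⟩ := exists_reduced hD hw hind hn hdvd
  refine ⟨m, y, hm, h1, h2, h3, ?_⟩
  rw [ClassGroup.mk0_eq_mk0_iff]
  refine ⟨c * q, p, mul_ne_zero (by exact_mod_cast hc) hq, hp, ?_⟩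
  rw [hI, ← Ideal.span_singleton_mul_span_singleton, mul_assoc, ← hpq, mul_left_comm]

theorem card_classGroup_le [IsDedekindDomain R] [CharZero R] [Finite (ClassGroup R)]
    (hD : 0 < D) (hw : w ^ 2 = -(D : R)) (hspan : ∀ r : R, ∃ a b : ℤ, r = a + b * w)
    (hind : ∀ a b : ℤ, (a : R) + b * w = 0 → a = 0 ∧ b = 0) (S : Finset (ℤ × ℤ))
    (hS : ∀ n x : ℤ, 0 < n → n ∣ x ^ 2 + D → 2 * |x| ≤ n → n ^ 2 ≤ x ^ 2 + D → (n, x) ∈ S) :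
    Nat.card (ClassGroup R) ≤ S.card := by
  choose n x hn hdvd hx hle hC using exists_reduced_mk0_eq hD hw hspan hind
  have hinj : Function.Injective fun C ↦
      (⟨(n C, x C), hS _ _ (hn C) (hdvd C) (hx C) (hle C)⟩ : S) := by
    intro C C' h
    simp only [Subtype.mk.injEq, Prod.mk.injEq] at h
    rw [← hC C, ← hC C']
    simp only [h.1, h.2]
  simpa using Nat.card_le_card_of_injective _ hinj

end Basis

end quadIdeal

/-- `K` has `ℚ`-basis `1, α`. -/
theorem exists_eq_add_mul_of_finrank_eq_two {K : Type*} [Field K] [Algebra ℚ K]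
    (hdeg : Module.finrank ℚ K = 2) {α : K} (hα : α ∉ (algebraMap ℚ K).range) (z : K) :
    ∃ p q : ℚ, z = p + q * α := by
  have := Module.finite_of_finrank_pos (hdeg ▸ two_pos)
  have hli : LinearIndependent ℚ ![(1 : K), α] := by
    rw [LinearIndependent.pair_iff' one_ne_zero]
    intro a ha
    exact hα ⟨a, by rw [← ha, Algebra.smul_def, mul_one]⟩
  have htop := hli.span_eq_top_of_card_eq_finrank' (by simp [hdeg])
  have hz : z ∈ Submodule.span ℚ (Set.range ![(1 : K), α]) := htop ▸ Submodule.mem_top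
  rw [Matrix.range_cons_cons_empty, Submodule.mem_span_pair] at hz
  obtain ⟨p, q, h⟩ := hz
  exact ⟨p, q, by rw [← h]; simp [Algebra.smul_def]⟩

/-- An element `p + q α` integral over `ℤ` has integral trace and norm. -/
theorem exists_int_trace_norm {K : Type*} [Field K] [CharZero K] {D : ℤ} {α : K}
    (hα : α ^ 2 = -(D : K)) (hαQ : ∀ r : ℚ, (r : K) ≠ α) {p q : ℚ}
    (hz : IsIntegral ℤ ((p : K) + q * α)) :
    ∃ t m : ℤ, 2 * p = t ∧ p ^ 2 + D * q ^ 2 = m := by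
  by_cases hq : q = 0
  · subst hq
    have : IsIntegral ℤ p := by
      rw [← isIntegral_algebraMap_iff (algebraMap ℚ K).injective]
      simpa using hz
    obtain ⟨a, rfl⟩ := IsIntegrallyClosed.isIntegral_iff.1 this
    exact ⟨2 * a, a ^ 2, by simp, by simp⟩
  set z : K := (p : K) + q * α with hzdef
  let f : Polynomial ℚ := Polynomial.X ^ 2 + Polynomial.C (-2 * p) * Polynomial.X
    + Polynomial.C (p ^ 2 + D * q ^ 2)
  have hfm : f.Monic := by
    simp only [f]
    monicity!
  have hfd : f.natDegree = 2 := by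
    simp only [f]
    compute_degree!
  have hfz : Polynomial.aeval z f = 0 := by
    simp only [f, map_add, map_mul, map_pow, Polynomial.aeval_X, Polynomial.aeval_C, eq_ratCast]
    push_cast
    linear_combination (z - p + q * α) * hzdef + (q : K) ^ 2 * hα
  have hzQ : z ∉ (algebraMap ℚ K).range := by
    rintro ⟨r, hr⟩
    refine hαQ ((r - p) / q) ?_
    have : (q : K) ≠ 0 := by exact_mod_cast hq
    rw [eq_ratCast] at hr
    push_cast
    rw [hr, hzdef]
    field_simp
    ring
  have hzi : IsIntegral ℚ z := hz.tower_top
  have hmin : minpoly ℚ z = f := by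
    refine (Polynomial.eq_of_monic_of_dvd_of_natDegree_le (minpoly.monic hzi) hfm
      (minpoly.dvd _ _ hfz) ?_).symm
    rw [hfd]
    exact (minpoly.two_le_natDegree_iff hzi).2 hzQ
  have hcoe := minpoly.isIntegrallyClosed_eq_field_fractions' ℚ hz
  rw [hmin] at hcoe
  have h1 := congrArg (Polynomial.coeff · 1) hcoe
  have h0 := congrArg (Polynomial.coeff · 0) hcoe
  simp only [Polynomial.coeff_map] at h0 h1
  refine ⟨-(minpoly ℤ z).coeff 1, (minpoly ℤ z).coeff 0, ?_, ?_⟩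
  · simp only [f, Polynomial.coeff_add, Polynomial.coeff_X_pow, Polynomial.coeff_C_mul,
      Polynomial.coeff_X_one, Polynomial.coeff_C_succ, algebraMap_int_eq, eq_intCast] at h1
    norm_num at h1
    push_cast
    linarith
  · simp only [f, Polynomial.coeff_add, Polynomial.coeff_X_pow, Polynomial.coeff_C_mul,
      Polynomial.coeff_X_zero, Polynomial.coeff_C_zero, algebraMap_int_eq, eq_intCast] at h0
    norm_num at h0
    exact h0

/-- If `p + q √-D` has integral trace and norm, with `D ≡ 1 mod 4` squarefree, then `p` and `q` are
integers. -/
theorem exists_int_of_trace_norm {D : ℤ} (hsq : Squarefree D) (hD : D % 4 = 1) {p q : ℚ} {t m : ℤ}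
    (ht : 2 * p = t) (hm : p ^ 2 + D * q ^ 2 = m) : ∃ a b : ℤ, p = a ∧ q = b := by
  have hs : (D : ℚ) * (2 * q) ^ 2 = (4 * m - t ^ 2 : ℤ) := by
    push_cast
    rw [← ht, ← hm]
    ring
  obtain ⟨s, hqs⟩ : ∃ s : ℤ, 2 * q = s := by
    set r := 2 * q
    have hden : (r.den : ℤ) * r.den ∣ D := by
      have h1 : D * r.num ^ 2 = (4 * m - t ^ 2) * r.den ^ 2 := by
        have h2 : (r.den : ℚ) ≠ 0 := by exact_mod_cast r.den_ne_zero
        have h3 := hs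
        rw [← Rat.num_div_den r] at h3
        field_simp at h3
        rw [mul_comm (4 * m - t ^ 2)]
        exact_mod_cast h3
      have h4 : IsCoprime ((r.den : ℤ) ^ 2) (r.num ^ 2) := by
        apply IsCoprime.pow
        rw [Int.isCoprime_iff_gcd_eq_one, Int.gcd_comm]
        exact r.reduced
      rw [← sq]
      exact h4.dvd_of_dvd_mul_right ⟨_, h1.trans (mul_comm _ _)⟩
    have : r.den = 1 := by
      have := Int.isUnit_iff.1 (hsq _ hden)
      omega
    exact ⟨r.num, ((Rat.den_eq_one_iff r).1 this).symm⟩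
  have hst : D * s ^ 2 = 4 * m - t ^ 2 := by
    rw [hqs] at hs
    exact_mod_cast hs
  have hmod : t % 2 = 0 ∧ s % 2 = 0 := by
    obtain ⟨k, hk⟩ : ∃ k, D = 4 * k + 1 := ⟨D / 4, by omega⟩
    subst hk
    have h5 : (t ^ 2 + s ^ 2) % 4 = 0 := by
      have : t ^ 2 + s ^ 2 = 4 * (m - k * s ^ 2) := by linear_combination hst
      omega
    rcases Int.emod_two_eq_zero_or_one t with h | h <;>
      rcases Int.emod_two_eq_zero_or_one s with h' | h' <;>
      [exact ⟨h, h'⟩; skip; skip; skip] <;> exfalso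
    all_goals
      obtain ⟨i, hi⟩ : ∃ i, t = 2 * i + t % 2 := ⟨t / 2, by omega⟩
      obtain ⟨j, hj⟩ : ∃ j, s = 2 * j + s % 2 := ⟨s / 2, by omega⟩
      rw [hi, hj, h, h'] at h5
      ring_nf at h5
      omega
  refine ⟨t / 2, s / 2, ?_, ?_⟩
  · have : t = 2 * (t / 2) := by omega
    have : (t : ℚ) = 2 * (t / 2 : ℤ) := by exact_mod_cast this
    linarith
  · have : s = 2 * (s / 2) := by omega
    have : (s : ℚ) = 2 * (s / 2 : ℤ) := by exact_mod_cast this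
    linarith

theorem ringOfIntegers_exists_eq_add_mul {K : Type*} [Field K] [NumberField K]
    (hdeg : Module.finrank ℚ K = 2) {D : ℤ} (hsq : Squarefree D) (hD : D % 4 = 1) (hpos : 0 < D)
    {w : 𝓞 K} (hw : w ^ 2 = -(D : 𝓞 K)) (z : 𝓞 K) : ∃ a b : ℤ, z = a + b * w := by
  have hα : (w : K) ^ 2 = -(D : K) := by
    have := congrArg (algebraMap (𝓞 K) K) hw
    simpa using this
  have hαQ : ∀ r : ℚ, (r : K) ≠ w := by
    intro r hr
    rw [← hr] at hα
    have h : r ^ 2 = -(D : ℚ) := by exact_mod_cast hα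
    have : (0 : ℚ) < D := by exact_mod_cast hpos
    nlinarith [sq_nonneg r]
  obtain ⟨p, q, hz⟩ := exists_eq_add_mul_of_finrank_eq_two hdeg
    (α := (w : K)) (by rintro ⟨r, hr⟩; exact hαQ r (by simpa using hr)) (z : K)
  have hzint : IsIntegral ℤ ((p : K) + q * (w : K)) := by
    rw [← hz]
    exact z.isIntegral_coe
  obtain ⟨t, m, ht, hm⟩ := exists_int_trace_norm hα hαQ hzint
  obtain ⟨a, b, rfl, rfl⟩ := exists_int_of_trace_norm hsq hD ht hm
  refine ⟨a, b, ?_⟩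
  apply RingOfIntegers.coe_injective
  simpa using hz

theorem int_add_mul_eq_zero {R : Type*} [CommRing R] [CharZero R] {D : ℤ}
    (hD : 0 < D) {w : R} (hw : w ^ 2 = -(D : R)) (a b : ℤ) (h : (a : R) + b * w = 0) :
    a = 0 ∧ b = 0 := by
  have h1 : ((a ^ 2 + D * b ^ 2 : ℤ) : R) = 0 := by
    push_cast
    linear_combination ((a : R) - b * w) * h + (b : R) ^ 2 * hw
  have h2 : a ^ 2 + D * b ^ 2 = 0 := by exact_mod_cast h1
  have hb : b ^ 2 = 0 := by nlinarith [sq_nonneg a, sq_nonneg b]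
  have ha : a ^ 2 = 0 := by rw [hb] at h2; linarith
  exact ⟨pow_eq_zero_iff two_ne_zero |>.1 ha, pow_eq_zero_iff two_ne_zero |>.1 hb⟩

/-- There are at most `19` positive definite reduced quadratic forms
`n X² + 2 x X Y + ((x² + 2437) / n) Y²`, with both signs of `x` allowed at the boundary. -/
theorem exists_finset_reduced_card_eq : ∃ S : Finset (ℤ × ℤ), S.card = 19 ∧ ∀ n x : ℤ, 0 < n →
    n ∣ x ^ 2 + 2437 → 2 * |x| ≤ n → n ^ 2 ≤ x ^ 2 + 2437 → (n, x) ∈ S := by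
  refine ⟨(Finset.Icc (1 : ℤ) 57 ×ˢ Finset.Icc (-28 : ℤ) 28).filter fun p ↦
    p.1 ∣ p.2 ^ 2 + 2437 ∧ 2 * |p.2| ≤ p.1 ∧ p.1 ^ 2 ≤ p.2 ^ 2 + 2437, by decide +kernel, ?_⟩
  intro n x hn hdvd hx hle
  have hn57 : n ≤ 57 := by
    have : (2 * |x|) ^ 2 ≤ n ^ 2 := pow_le_pow_left₀ (by positivity) hx 2
    rw [mul_pow, sq_abs] at this
    nlinarith
  have := abs_le.1 (show |x| ≤ 28 by omega)
  rw [Finset.mem_filter, Finset.mem_product, Finset.mem_Icc, Finset.mem_Icc]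
  exact ⟨⟨⟨hn, hn57⟩, this⟩, hdvd, hx, hle⟩

theorem squarefree_2437 : Squarefree (2437 : ℤ) := by
  have : Prime (2437 : ℤ) := by
    exact_mod_cast Nat.prime_iff_prime_int.1 (by norm_num : Nat.Prime 2437)
  exact this.squarefree

theorem three_class_group_of_Q_sqrt_neg2437 (K : Type*) [Field K]
    [NumberField K] (hdeg : Module.finrank ℚ K = 2)
    (α : K) (hα : α ^ 2 = -2437)
    (P : Sylow 3 (ClassGroup (𝓞 K))) :
    Nonempty (↥(P : Subgroup (ClassGroup (𝓞 K))) ≃*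
      Multiplicative (ZMod 3 × ZMod 3)) := by
  have hαint : IsIntegral ℤ α := by
    refine IsIntegral.of_pow two_pos (hα ▸ ?_)
    exact_mod_cast isIntegral_algebraMap (R := ℤ) (A := K) (x := -2437)
  obtain ⟨w, hw⟩ : ∃ w : 𝓞 K, w ^ 2 = -((2437 : ℤ) : 𝓞 K) := by
    obtain ⟨w, rfl⟩ : ∃ w : 𝓞 K, algebraMap (𝓞 K) K w = α := ⟨⟨α, hαint⟩, rfl⟩
    refine ⟨w, RingOfIntegers.coe_injective ?_⟩
    rw [map_pow, map_neg, map_intCast, Int.cast_ofNat]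
    exact hα
  have hpos : (0 : ℤ) < 2437 := by norm_num
  have hspan := ringOfIntegers_exists_eq_add_mul hdeg squarefree_2437 (by norm_num) hpos hw
  have hind := int_add_mul_eq_zero hpos hw
  have hcard : Nat.card (ClassGroup (𝓞 K)) ≤ 19 := by
    obtain ⟨S, hcardS, hS⟩ := exists_finset_reduced_card_eq
    exact hcardS ▸ quadIdeal.card_classGroup_le hpos hw hspan hind S hS
  let J (n x : ℤ) (hn : n ≠ 0) : nonZeroDivisors (Ideal (𝓞 K)) :=
    ⟨quadIdeal w n x, mem_nonZeroDivisors_of_ne_zero (quadIdeal.ne_bot hn)⟩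
  have mk0_eq_one (I : nonZeroDivisors (Ideal (𝓞 K))) :
      ClassGroup.mk0 I = 1 ↔ (I : Ideal (𝓞 K)).IsPrincipal := ClassGroup.mk0_eq_one_iff I.2
  have not_principal {n x : ℤ} (hn : 1 < n) (hdvd : n ∣ x ^ 2 + 2437)
      (hgcd : (Int.gcd (n ^ 2) (x ^ 2 + 2437) : ℤ) < 2437) : ¬ (quadIdeal w n x).IsPrincipal :=
    quadIdeal.not_isPrincipal hw hspan hind hn hdvd hgcd
  let a := ClassGroup.mk0 (J 29 (-12134) (by norm_num))
  let b := ClassGroup.mk0 (J 41 (-17187) (by norm_num))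
  let b' := ClassGroup.mk0 (J 41 17187 (by norm_num))
  have ha : a ^ 3 = 1 := by
    simp only [a]
    rw [← map_pow, mk0_eq_one]
    refine ⟨((121 : ℤ) : 𝓞 K) + (2 : ℤ) * w, ?_⟩
    rw [Ideal.submodule_span_eq, ← quadIdeal.eq_span_singleton hw (x := -12134) (c := -60) (d := 1)
      (by norm_num) (by norm_num)]
    rw [SubmonoidClass.coe_pow]
    simp only [J, pow_succ, pow_zero, one_mul]
    rw [quadIdeal.mul_eq hw (r := 5021) (s := 0) (t := 6) (by norm_num) (by norm_num),
      quadIdeal.mul_eq hw (r := 0) (s := 5021) (t := 6) (by norm_num) (by norm_num)]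
    norm_num
  have hb : b ^ 3 = 1 := by
    simp only [b]
    rw [← map_pow, mk0_eq_one]
    refine ⟨((173 : ℤ) : 𝓞 K) + (4 : ℤ) * w, ?_⟩
    rw [Ideal.submodule_span_eq, ← quadIdeal.eq_span_singleton hw (x := -17187) (c := -43) (d := 1)
      (by norm_num) (by norm_num)]
    rw [SubmonoidClass.coe_pow]
    simp only [J, pow_succ, pow_zero, one_mul]
    rw [quadIdeal.mul_eq hw (r := -15091) (s := 0) (t := -18) (by norm_num) (by norm_num),
      quadIdeal.mul_eq hw (r := 0) (s := -15091) (t := -18) (by norm_num) (by norm_num)]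
    norm_num
  have hbb' : b * b' = 1 := by
    simp only [b, b']
    rw [← map_mul, mk0_eq_one]
    refine ⟨((41 : ℤ) : 𝓞 K), ?_⟩
    exact quadIdeal.mul_neg_eq hw (x := -17187) (m := 7204766) (r := -15091) (s := 0) (t := -18)
      (by norm_num) (by norm_num)
  have ha1 : a ≠ 1 := by
    rw [Ne, mk0_eq_one]
    exact not_principal (by norm_num) (by norm_num) (by norm_num)
  have hb1 : b ≠ 1 := by
    rw [Ne, mk0_eq_one]
    exact not_principal (by norm_num) (by norm_num) (by norm_num)
  have hab : a * b ≠ 1 := by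
    simp only [a, b]
    rw [← map_mul, Ne, mk0_eq_one, Submonoid.coe_mul]
    simp only [J]
    rw [quadIdeal.congr_right (x := -418) (y := -12134) (by norm_num),
      quadIdeal.congr_right (x := -418) (y := -17187) (by norm_num),
      quadIdeal.mul_eq hw (r := 17) (s := -12) (t := 0) (by norm_num) (by norm_num)]
    exact not_principal (by norm_num) (by norm_num) (by norm_num)
  have hab' : a * b' ≠ 1 := by
    simp only [a, b']
    rw [← map_mul, Ne, mk0_eq_one, Submonoid.coe_mul]
    simp only [J]
    rw [quadIdeal.congr_right (x := 336) (y := -12134) (by norm_num),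
      quadIdeal.congr_right (x := 336) (y := 17187) (by norm_num),
      quadIdeal.mul_eq hw (r := 17) (s := -12) (t := 0) (by norm_num) (by norm_num)]
    exact not_principal (by norm_num) (by norm_num) (by norm_num)
  exact sylow_three_mulEquiv_of_card_lt (by omega) ha hb ha1 hb1 hab
    (fun h ↦ hab' (h ▸ hbb')) P
end

section
/- Let K = ℚ(√32009) be the real quadratic field of discriminant d = 32009. Then the 3-primary part of the ideal class group of the ring of integers of K (equivalently, its Sylow 3-subgroup) is isomorphic to (ℤ/3ℤ) × (ℤ/3ℤ); in particular, K has an elementary bicyclic 3-class group. -/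
open NumberField Module
open scoped nonZeroDivisors

/-- The multiplication matrices of a quadratic algebra with basis `1, ω`, where `ω ^ 2 = ω + c`. -/
theorem leftMulMatrix_of_basis_one_omega {R A : Type*} [CommRing R] [CommRing A] [Algebra R A]
    (b : Basis (Fin 2) R A) (c : R) (h0 : b 0 = 1) (h1 : b 1 ^ 2 = b 1 + algebraMap R A c)
    (x : A) :
    Algebra.leftMulMatrix b x =
      !![b.repr x 0, c * b.repr x 1; b.repr x 1, b.repr x 0 + b.repr x 1] := by
  have hx : x = b.repr x 0 • b 0 + b.repr x 1 • b 1 := by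
    conv_lhs => rw [← b.sum_repr x, Fin.sum_univ_two]
  have e0 : x * b 0 = x := by rw [h0, mul_one]
  have e1 : x * b 1 = (c * b.repr x 1) • b 0 + (b.repr x 0 + b.repr x 1) • b 1 := by
    conv_lhs => rw [hx]
    rw [h0]
    simp only [Algebra.smul_def, map_mul, map_add]
    linear_combination (algebraMap R A (b.repr x 1)) * h1
  ext i j
  rw [Algebra.leftMulMatrix_eq_repr_mul]
  fin_cases j
  · simp only [Fin.zero_eta, e0]
    fin_cases i <;> simp
  · simp only [Fin.mk_one, e1, map_add, map_smul, Basis.repr_self]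
    fin_cases i <;> simp

theorem norm_of_basis_one_omega {R A : Type*} [CommRing R] [CommRing A] [Algebra R A]
    (b : Basis (Fin 2) R A) (c : R) (h0 : b 0 = 1) (h1 : b 1 ^ 2 = b 1 + algebraMap R A c)
    (x : A) :
    Algebra.norm R x = b.repr x 0 ^ 2 + b.repr x 0 * b.repr x 1 - c * b.repr x 1 ^ 2 := by
  rw [Algebra.norm_eq_matrix_det b, leftMulMatrix_of_basis_one_omega b c h0 h1,
    Matrix.det_fin_two_of]
  ring

theorem trace_of_basis_one_omega {R A : Type*} [CommRing R] [CommRing A] [Algebra R A]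
    (b : Basis (Fin 2) R A) (c : R) (h0 : b 0 = 1) (h1 : b 1 ^ 2 = b 1 + algebraMap R A c)
    (x : A) :
    Algebra.trace R A x = 2 * b.repr x 0 + b.repr x 1 := by
  rw [Algebra.trace_eq_matrix_trace b, leftMulMatrix_of_basis_one_omega b c h0 h1,
    Matrix.trace_fin_two_of]
  ring

/-- If `1 + 4 * c` is squarefree and `x + y * ω`, where `ω ^ 2 = ω + c` and `x`, `y` are rational,
has integral trace and norm, then `x` and `y` are integers. -/
theorem exists_int_of_trace_norm_int {c : ℤ} (hc : Squarefree (1 + 4 * c)) {x y : ℚ} {t n : ℤ}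
    (ht : 2 * x + y = t) (hn : x ^ 2 + x * y - c * y ^ 2 = n) :
    ∃ p q : ℤ, x = p ∧ y = q := by
  have h : ((1 + 4 * c : ℤ) : ℚ) * y ^ 2 = ((t ^ 2 - 4 * n : ℤ) : ℚ) := by
    push_cast
    rw [← ht, ← hn]; ring
  have hy : y = y.num / y.den := (Rat.num_div_den y).symm
  have h2 : (1 + 4 * c) * y.num ^ 2 = (t ^ 2 - 4 * n) * (y.den : ℤ) ^ 2 := by
    have hd : (y.den : ℚ) ≠ 0 := by exact_mod_cast y.den_nz
    rw [hy] at h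
    field_simp at h
    rw [mul_comm (t ^ 2 - 4 * n)]
    exact_mod_cast h
  have hcop : IsCoprime ((y.den : ℤ) ^ 2) (y.num ^ 2) := by
    refine IsCoprime.pow ?_
    rw [Int.isCoprime_iff_gcd_eq_one, Int.gcd_comm]
    exact y.reduced
  have hdvd : (y.den : ℤ) * y.den ∣ 1 + 4 * c := by
    rw [← sq]
    exact hcop.dvd_of_dvd_mul_right (Dvd.intro_left _ h2.symm)
  have hden : (y.den : ℤ) = 1 := by
    have := Int.isUnit_iff.1 (hc _ hdvd)
    have := y.den_pos
    omega
  obtain ⟨q, hq⟩ : ∃ q : ℤ, y = q :=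
    ⟨y.num, by rw [hy]; simp [show y.den = 1 by exact_mod_cast hden]⟩
  have h3 : (1 + 4 * c) * q ^ 2 = t ^ 2 - 4 * n := by
    rw [hq] at h; exact_mod_cast h
  have h4 : Even (t - q) := by
    have : Even ((t - q) * (t + q)) := ⟨2 * (c * q ^ 2 + n), by linear_combination -h3⟩
    rcases Int.even_mul.1 this with h | h
    · exact h
    · have : t - q = (t + q) - 2 * q := by ring
      rw [this]
      exact h.sub (even_two_mul q)
  obtain ⟨p, hp⟩ := h4
  refine ⟨p, q, ?_, hq⟩
  have : (t : ℚ) - q = p + p := by exact_mod_cast hp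
  linear_combination (ht - hq + this) / 2

theorem exists_integral_basis_one_omega {K : Type*} [Field K] [NumberField K]
    (hdeg : finrank ℚ K = 2) {c : ℤ} (hc : Squarefree (1 + 4 * c)) (hc1 : ¬ IsSquare (1 + 4 * c))
    (α : K) (hα : α ^ 2 = ((1 + 4 * c : ℤ) : K)) :
    ∃ b : Basis (Fin 2) ℤ (𝓞 K), b 0 = 1 ∧ b 1 ^ 2 = b 1 + algebraMap ℤ (𝓞 K) c := by
  set w : K := (1 + α) / 2 with hw
  have hw2 : w ^ 2 = w + c := by
    rw [hw]; push_cast at hα; field_simp; linear_combination hα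
  have hli : LinearIndependent ℚ ![(1 : K), w] := by
    rw [LinearIndependent.pair_iff' one_ne_zero]
    intro a ha
    apply hc1
    rw [← Rat.isSquare_intCast_iff]
    refine ⟨2 * a - 1, ?_⟩
    apply (algebraMap ℚ K).injective
    have : algebraMap ℚ K a = w := by rw [← ha, Algebra.smul_def, mul_one]
    simp only [map_mul, map_sub, this, map_intCast, map_ofNat, map_one]
    rw [← hα, hw]; ring
  set B : Basis (Fin 2) ℚ K := basisOfLinearIndependentOfCardEqFinrank hli (by simp [hdeg]) with hB
  have B0 : B 0 = 1 := by simp [hB]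
  have B1 : B 1 = w := by simp [hB]
  have hB2 : B 1 ^ 2 = B 1 + algebraMap ℚ K c := by rw [B1, hw2]; simp
  have hwint : IsIntegral ℤ w := by
    refine ⟨Polynomial.X ^ 2 - Polynomial.X - Polynomial.C c, by monicity!, ?_⟩
    simp [hw2, -eq_intCast, -map_intCast, Polynomial.eval₂_C]
  let ω : 𝓞 K := ⟨w, hwint⟩
  have hω : (algebraMap (𝓞 K) K ω) = w := rfl
  have hli' : LinearIndependent ℤ ![(1 : 𝓞 K), ω] := by
    rw [LinearIndependent.pair_iff] at hli ⊢
    intro s t hst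
    have := congrArg (algebraMap (𝓞 K) K) hst
    have h := hli s t (by simpa [Algebra.smul_def, hω] using this)
    exact_mod_cast h
  have hsp : ⊤ ≤ Submodule.span ℤ (Set.range ![(1 : 𝓞 K), ω]) := by
    intro x _
    have ht := trace_of_basis_one_omega B (c : ℚ) B0 hB2 x
    have hn := norm_of_basis_one_omega B (c : ℚ) B0 hB2 x
    rw [← Algebra.coe_trace_int] at ht
    rw [← Algebra.coe_norm_int] at hn
    obtain ⟨p, q, hp, hq⟩ := exists_int_of_trace_norm_int hc ht.symm hn.symm
    have hx : (x : K) = p + q * w := by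
      rw [← B.sum_repr (x : K), Fin.sum_univ_two, hp, hq, B0, B1, Algebra.smul_def,
        Algebra.smul_def]
      simp
    have hx' : x = p • 1 + q • ω := by
      apply RingOfIntegers.coe_injective
      refine hx.trans ?_
      simp [hω]
    rw [hx', Matrix.range_cons, Matrix.range_cons, Matrix.range_empty, Set.union_empty,
      Set.singleton_union]
    exact Submodule.mem_span_pair.2 ⟨p, q, rfl⟩
  refine ⟨Basis.mk hli' hsp, by simp, ?_⟩
  apply RingOfIntegers.coe_injective
  simp [hω, hw2]

theorem discr_of_basis_one_omega {K : Type*} [Field K] [NumberField K]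
    (b : Basis (Fin 2) ℤ (𝓞 K)) (c : ℤ) (h0 : b 0 = 1)
    (h1 : b 1 ^ 2 = b 1 + algebraMap ℤ (𝓞 K) c) : discr K = 1 + 4 * c := by
  have ht := trace_of_basis_one_omega b c h0 h1
  have e1 : b.repr 1 = Finsupp.single 0 1 := by rw [← h0, b.repr_self]
  have hc : b.repr (algebraMap ℤ (𝓞 K) c) = Finsupp.single 0 c := by
    rw [Algebra.algebraMap_eq_smul_one, map_smul, e1]; simp
  rw [← discr_eq_discr K b, Algebra.discr_def, Matrix.det_fin_two]
  simp only [Algebra.traceMatrix_apply, Algebra.traceForm_apply, h0, one_mul, mul_one, ← sq, h1,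
    one_pow, ht, map_add, e1, hc, b.repr_self]
  simp
  ring

theorem exists_ringHom_of_basis_one_omega {R : Type*} [CommRing R]
    (b : Basis (Fin 2) ℤ R) (c : ℤ) (h0 : b 0 = 1)
    (h1 : b 1 ^ 2 = b 1 + algebraMap ℤ R c) {S : Type*} [CommRing S] (r : S)
    (hr : r ^ 2 = r + c) : ∃ φ : R →+* S, φ (b 1) = r := by
  have hx (x : R) : x = b.repr x 0 • b 0 + b.repr x 1 • b 1 := by
    conv_lhs => rw [← b.sum_repr x, Fin.sum_univ_two]
  set f := b.constr ℤ ![1, r]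
  have f0 : f 1 = 1 := by rw [← h0]; simp [f]
  have f1 : f (b 1) = r := by simp [f]
  refine ⟨(AlgHom.ofLinearMap f f0 fun x y ↦ ?_).toRingHom, f1⟩
  have e2 : x * y = (b.repr x 0 * b.repr y 0 + c * (b.repr x 1 * b.repr y 1)) • 1 +
      (b.repr x 0 * b.repr y 1 + b.repr x 1 * b.repr y 0 + b.repr x 1 * b.repr y 1) • b 1 := by
    conv_lhs => rw [hx x, hx y]
    rw [h0]
    simp only [Algebra.smul_def, map_mul, map_add]
    linear_combination (algebraMap ℤ R (b.repr x 1)) * (algebraMap ℤ R (b.repr y 1)) * h1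
  rw [e2]
  conv_rhs => rw [hx x, hx y]
  simp only [h0, map_add, map_smul, f0, f1]
  simp only [zsmul_eq_mul]
  push_cast
  linear_combination (-(b.repr x 1 : S)) * (b.repr y 1 : S) * hr

/-- The classes of all prime ideals containing the integer `p` lie in `H`. -/
def PrimesOverMem {R : Type*} [CommRing R] [IsDedekindDomain R]
    (H : Subgroup (ClassGroup R)) (p : ℕ) : Prop :=
  ∀ P : (Ideal R)⁰, (P : Ideal R).IsPrime → (p : R) ∈ (P : Ideal R) → ClassGroup.mk0 P ∈ H

section

variable {R : Type*} [CommRing R] [IsDedekindDomain R] [Module.Free ℤ R]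
  [Module.Finite ℤ R] {H : Subgroup (ClassGroup R)}

theorem mk0_mem_of_primesOverMem (I : (Ideal R)⁰)
    (hI : ∀ q : ℕ, q.Prime → q ∣ Ideal.absNorm (I : Ideal R) → PrimesOverMem H q) :
    ClassGroup.mk0 I ∈ H := by
  obtain ⟨I, hI0⟩ := I
  induction I using UniqueFactorizationMonoid.induction_on_prime with
  | h₁ => exact absurd rfl (nonZeroDivisors.ne_zero hI0)
  | h₂ x hx =>
    have : x = 1 := by rwa [Ideal.isUnit_iff, ← Ideal.one_eq_top] at hx
    subst this
    convert H.one_mem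
    exact map_one ClassGroup.mk0
  | h₃ J P hJ hP ih =>
    have hJ0 : J ∈ (Ideal R)⁰ := mem_nonZeroDivisors_of_ne_zero hJ
    have hP0 : P ∈ (Ideal R)⁰ := mem_nonZeroDivisors_of_ne_zero hP.ne_zero
    have hPp : P.IsPrime := Ideal.isPrime_of_prime hP
    have : (⟨P * J, hI0⟩ : (Ideal R)⁰) = ⟨P, hP0⟩ * ⟨J, hJ0⟩ := rfl
    rw [this, map_mul]
    refine H.mul_mem ?_ (ih hJ0 fun q hq hqJ ↦ hI q hq ?_)
    · have hne : Ideal.absNorm P ≠ 1 := by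
        rw [Ne, Ideal.absNorm_eq_one_iff]
        exact hPp.ne_top
      have hmem : ((Ideal.absNorm P : ℕ) : R) ∈ P := Ideal.absNorm_mem P
      have key : ∀ n : ℕ, n ≠ 0 → (n : R) ∈ P → ∃ q, q.Prime ∧ q ∣ n ∧ (q : R) ∈ P := by
        intro n
        induction n using Nat.recOnMul with
        | zero => simp
        | one =>
          intro _ h
          exact absurd ((Ideal.eq_top_iff_one P).2 (by simpa using h)) hPp.ne_top
        | prime p hp => exact fun _ h ↦ ⟨p, hp, dvd_rfl, h⟩
        | mul a b ha hb =>
          intro h0 h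
          rw [Nat.cast_mul] at h
          rcases hPp.mem_or_mem h with h | h
          · obtain ⟨q, hq, hd, hm⟩ := ha (left_ne_zero_of_mul h0) h
            exact ⟨q, hq, hd.mul_right b, hm⟩
          · obtain ⟨q, hq, hd, hm⟩ := hb (right_ne_zero_of_mul h0) h
            exact ⟨q, hq, hd.mul_left a, hm⟩
      obtain ⟨q, hq, hd, hm⟩ := key _ (Ideal.absNorm_ne_zero_of_nonZeroDivisors ⟨P, hP0⟩) hmem
      refine hI q hq ?_ ⟨P, hP0⟩ hPp hm
      rw [map_mul]
      exact hd.mul_right _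
    · rw [map_mul]
      exact hqJ.mul_left _

theorem absNorm_dvd_sq_of_mem (hR : finrank ℤ R = 2) {p : ℕ} {P : Ideal R} (h : (p : R) ∈ P) :
    Ideal.absNorm P ∣ p ^ 2 := by
  have := Ideal.absNorm_dvd_norm_of_mem h
  rw [show (p : R) = algebraMap ℤ R p by simp, Algebra.norm_algebraMap, hR] at this
  exact_mod_cast this

/-- If `β` has norm `± p * m` with `p ∤ m` and all primes above the prime factors of `m` have
class in `H`, then every prime ideal containing `p` and `β` has class in `H`. -/
theorem mk0_mem_of_norm_eq (hR : finrank ℤ R = 2) {p m : ℕ} (hp : p.Prime) (hpm : ¬ p ∣ m)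
    (hm : ∀ q : ℕ, q.Prime → q ∣ m → PrimesOverMem H q) {β : R}
    (hβ : (Algebra.norm ℤ β).natAbs = p * m) (P : (Ideal R)⁰) (hP : (P : Ideal R).IsPrime)
    (hpP : (p : R) ∈ (P : Ideal R)) (hβP : β ∈ (P : Ideal R)) : ClassGroup.mk0 P ∈ H := by
  have hm0 : m ≠ 0 := by rintro rfl; exact hpm (dvd_zero p)
  have hβ0 : β ≠ 0 := by
    rintro rfl
    rw [Algebra.norm_zero] at hβ
    exact mul_ne_zero hp.ne_zero hm0 hβ.symm
  obtain ⟨J, hJ⟩ := Ideal.dvd_iff_le.2 ((Ideal.span_singleton_le_iff_mem _).2 hβP)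
  have hJ0 : J ∈ (Ideal R)⁰ := by
    refine mem_nonZeroDivisors_of_ne_zero ?_
    rintro rfl
    rw [mul_zero] at hJ
    exact hβ0 (Ideal.span_singleton_eq_bot.1 hJ)
  have hN : Ideal.absNorm (P : Ideal R) * Ideal.absNorm J = p * m := by
    rw [← map_mul, ← hJ, Ideal.absNorm_span_singleton, hβ]
  have hNJ : Ideal.absNorm J ∣ m := by
    obtain ⟨k, _, hk⟩ := (Nat.dvd_prime_pow hp).1 (absNorm_dvd_sq_of_mem hR hpP)
    rcases k with _ | k
    · rw [pow_zero, Ideal.absNorm_eq_one_iff] at hk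
      exact absurd hk hP.ne_top
    · rw [hk, pow_succ', mul_assoc] at hN
      exact ⟨p ^ k, by rw [← Nat.eq_of_mul_eq_mul_left hp.pos hN, mul_comm]⟩
  have hJH : ClassGroup.mk0 ⟨J, hJ0⟩ ∈ H :=
    mk0_mem_of_primesOverMem _ fun q hq hqJ ↦ hm q hq (hqJ.trans hNJ)
  have h1 : ClassGroup.mk0 P * ClassGroup.mk0 ⟨J, hJ0⟩ = 1 := by
    rw [← map_mul, ClassGroup.mk0_eq_one_iff]
    exact ⟨β, by simpa using hJ.symm⟩
  rw [eq_inv_of_mul_eq_one_left h1]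
  exact H.inv_mem hJH

theorem PrimesOverMem.of_norm_eq (hR : finrank ℤ R = 2) {p m : ℕ} (hp : p.Prime) (hpm : ¬ p ∣ m)
    (hm : ∀ q ∈ m.primeFactors, PrimesOverMem H q) {β β' : R}
    (hββ' : (p : R) ∣ β * β')
    (hβ : (Algebra.norm ℤ β).natAbs = p * m) (hβ' : (Algebra.norm ℤ β').natAbs = p * m) :
    PrimesOverMem H p := by
  have hm0 : m ≠ 0 := by rintro rfl; exact hpm (dvd_zero p)
  have hm' (q : ℕ) (hq : q.Prime) (hqm : q ∣ m) := hm q (Nat.mem_primeFactors.2 ⟨hq, hqm, hm0⟩)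
  intro P hP hpP
  rcases hP.mem_or_mem (Ideal.mem_of_dvd _ hββ' hpP) with h | h
  · exact mk0_mem_of_norm_eq hR hp hpm hm' hβ P hP hpP h
  · exact mk0_mem_of_norm_eq hR hp hpm hm' hβ' P hP hpP h

/-- An integer prime modulo which `ω ^ 2 = ω + c` has no solution is inert. -/
theorem PrimesOverMem.of_inert (hR : finrank ℤ R = 2) {p : ℕ} (hp : p.Prime) {c : ℤ} {ω : R}
    (hω : ω ^ 2 = ω + c) (h : ∀ r : ZMod p, r ^ 2 ≠ r + c) : PrimesOverMem H p := by
  intro P hP hpP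
  have := Fact.mk hp
  obtain ⟨k, hk2, hk⟩ := (Nat.dvd_prime_pow hp).1 (absNorm_dvd_sq_of_mem hR hpP)
  interval_cases k
  · rw [pow_zero, Ideal.absNorm_eq_one_iff] at hk
    exact absurd hk hP.ne_top
  · exfalso
    have hcard : Nat.card (R ⧸ (P : Ideal R)) = p := by
      rw [← pow_one p, ← hk, Ideal.absNorm_apply, Submodule.cardQuot_apply]
    have : Finite (R ⧸ (P : Ideal R)) :=
      Nat.finite_of_card_ne_zero (by rw [hcard]; exact hp.ne_zero)
    have := Fintype.ofFinite (R ⧸ (P : Ideal R))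
    let e : ZMod p ≃+* R ⧸ (P : Ideal R) :=
      ZMod.ringEquivOfPrime _ hp (by rw [← Nat.card_eq_fintype_card, hcard])
    refine h (e.symm (Ideal.Quotient.mk _ ω)) ?_
    rw [← map_pow, ← map_pow, hω]
    simp
  · have hspan : Ideal.span {(p : R)} = P := by
      obtain ⟨J, hJ⟩ := Ideal.dvd_iff_le.2 ((Ideal.span_singleton_le_iff_mem _).2 hpP)
      have hN : Ideal.absNorm (Ideal.span {(p : R)}) = p ^ 2 := by
        rw [Ideal.absNorm_span_singleton, show (p : R) = algebraMap ℤ R p by simp,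
          Algebra.norm_algebraMap, hR, Int.natAbs_pow, Int.natAbs_natCast]
      rw [hJ, map_mul, hk] at hN
      have hJ1 : Ideal.absNorm J = 1 :=
        Nat.eq_of_mul_eq_mul_left (pow_pos hp.pos 2) (by rw [hN, mul_one])
      rw [hJ, Ideal.absNorm_eq_one_iff.1 hJ1, Ideal.mul_top]
    have : ClassGroup.mk0 P = 1 := by
      rw [ClassGroup.mk0_eq_one_iff, ← hspan]
      exact ⟨p, rfl⟩
    rw [this]
    exact H.one_mem

end

/-- Two ideals whose product is `(p)` exhaust the primes above `p`. -/
theorem PrimesOverMem.of_mul_eq_span {R : Type*} [CommRing R] [IsDedekindDomain R]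
    {H : Subgroup (ClassGroup R)} {p : ℕ} (P Q : (Ideal R)⁰)
    (hP : (P : Ideal R).IsMaximal) (hQ : (Q : Ideal R).IsMaximal)
    (hPQ : (P * Q : Ideal R) = Ideal.span {(p : R)})
    (hH : ClassGroup.mk0 P ∈ H) : PrimesOverMem H p := by
  have h1 : ClassGroup.mk0 P * ClassGroup.mk0 Q = 1 := by
    rw [← map_mul, ClassGroup.mk0_eq_one_iff]
    exact ⟨p, by simpa using hPQ⟩
  intro I hI hpI
  have : (P * Q : Ideal R) ≤ I := by
    rw [hPQ]
    exact (Ideal.span_singleton_le_iff_mem _).2 hpI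
  rcases hI.mul_le.1 this with h | h
  · rwa [← Subtype.ext (hP.eq_of_le hI.ne_top h)]
  · rw [← Subtype.ext (hQ.eq_of_le hI.ne_top h), ← inv_eq_of_mul_eq_one_right h1]
    exact H.inv_mem hH

theorem nrComplexPlaces_eq_zero_of_discr_pos {K : Type*} [Field K] [NumberField K]
    (hdeg : finrank ℚ K = 2) (hpos : 0 < discr K) : InfinitePlace.nrComplexPlaces K = 0 := by
  have h1 := InfinitePlace.card_add_two_mul_card_eq_rank K
  have h2 := sign_discr K
  rw [Int.sign_eq_one_of_pos hpos] at h2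
  have h3 : InfinitePlace.nrComplexPlaces K ≤ 1 := by omega
  interval_cases h : InfinitePlace.nrComplexPlaces K
  · rfl
  · norm_num at h2

/-- Minkowski's bound: the class group is generated by the primes of small norm. -/
theorem eq_top_of_primesOverMem {K : Type*} [Field K] [NumberField K]
    (hdeg : finrank ℚ K = 2) {n : ℕ} (hpos : 0 < discr K) (hn : discr K < 4 * (n + 1) ^ 2)
    {H : Subgroup (ClassGroup (𝓞 K))} (hH : ∀ p : ℕ, p.Prime → p ≤ n → PrimesOverMem H p) :
    H = ⊤ := by
  rw [Subgroup.eq_top_iff']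
  intro C
  obtain ⟨I, rfl, hI⟩ := exists_ideal_in_class_of_norm_le C
  have hbound : Ideal.absNorm (I : Ideal (𝓞 K)) ≤ n := by
    rw [nrComplexPlaces_eq_zero_of_discr_pos hdeg hpos, hdeg, pow_zero, one_mul,
      abs_of_pos (by exact_mod_cast hpos)] at hI
    have h1 : √(discr K : ℝ) < 2 * (n + 1) := by
      rw [Real.sqrt_lt' (by positivity)]
      have : (discr K : ℝ) < 4 * (n + 1) ^ 2 := by exact_mod_cast hn
      linarith
    have h2 : (Ideal.absNorm (I : Ideal (𝓞 K)) : ℝ) < n + 1 := by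
      norm_num at hI
      linarith
    exact Nat.lt_succ_iff.1 (by exact_mod_cast h2)
  exact mk0_mem_of_primesOverMem I fun q hq hqI ↦ hH q hq
    ((Nat.le_of_dvd (Ideal.absNorm_pos_of_nonZeroDivisors I) hqI).trans hbound)

theorem torsion_eq_one_or_neg_one_of_discr_pos {K : Type*} [Field K] [NumberField K]
    (hdeg : finrank ℚ K = 2) (hpos : 0 < discr K) {x : (𝓞 K)ˣ} (hx : x ∈ Units.torsion K) :
    x = 1 ∨ x = -1 := by
  have h1 := InfinitePlace.card_add_two_mul_card_eq_rank K
  rw [nrComplexPlaces_eq_zero_of_discr_pos hdeg hpos, hdeg] at h1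
  by_cases! hc : 2 < orderOf x
  · have hord : orderOf (x : K) = orderOf (x : 𝓞 K) :=
      orderOf_injective (algebraMap (𝓞 K) K : 𝓞 K →* K) RingOfIntegers.coe_injective (x : 𝓞 K)
    rw [← orderOf_units, ← hord] at hc
    have := InfinitePlace.IsPrimitiveRoot.nrRealPlaces_eq_zero_of_two_lt hc
      (IsPrimitiveRoot.orderOf (x : K))
    omega
  · have h0 : 0 < orderOf x := orderOf_pos_iff.2 ((CommGroup.mem_torsion _).1 hx)
    have hsq : x ^ 2 = 1 := by
      interval_cases hi : orderOf x
      · rw [orderOf_eq_one_iff.1 hi, one_pow]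
      · rw [← hi, pow_orderOf_eq_one]
    have : (x : 𝓞 K) * x = 1 := by rw [← sq, ← Units.val_pow_eq_pow_val, hsq, Units.val_one]
    rcases mul_self_eq_one_iff.1 this with h | h
    · exact Or.inl (Units.ext h)
    · exact Or.inr (Units.ext (by simpa using h))

/-- In a real quadratic field the units modulo cubes are generated by any unit that is not a
cube. -/
theorem exists_unit_eq_zpow_mul_cube {K : Type*} [Field K] [NumberField K]
    (hdeg : finrank ℚ K = 2) (hpos : 0 < discr K) {ε : (𝓞 K)ˣ} (hε : ∀ η, ε ≠ η ^ 3)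
    (u : (𝓞 K)ˣ) : ∃ (k : ℤ) (η : (𝓞 K)ˣ), u = ε ^ k * η ^ 3 := by
  have hrank : Units.rank K = 1 := by
    have h1 := InfinitePlace.card_add_two_mul_card_eq_rank K
    rw [Units.rank, InfinitePlace.card_eq_nrRealPlaces_add_nrComplexPlaces]
    rw [nrComplexPlaces_eq_zero_of_discr_pos hdeg hpos, hdeg] at *
    omega
  obtain ⟨f, hf⟩ : ∃ f : (𝓞 K)ˣ, ∀ x, ∃ (n : ℤ) (η : (𝓞 K)ˣ), x = f ^ n * η ^ 3 := by
    refine ⟨Units.fundSystem K ⟨0, by omega⟩, fun x ↦ ?_⟩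
    obtain ⟨⟨ζ, e⟩, he, -⟩ := Units.exist_unique_eq_mul_prod K x
    refine ⟨e ⟨0, by omega⟩, ζ, ?_⟩
    have hζ : (ζ : (𝓞 K)ˣ) ^ 3 = ζ := by
      rcases torsion_eq_one_or_neg_one_of_discr_pos hdeg hpos ζ.2 with h | h <;> rw [h]
      · simp
      · exact Odd.neg_one_pow (by decide)
    have hprod : ∏ i, (Units.fundSystem K i) ^ (e i) =
        Units.fundSystem K ⟨0, by omega⟩ ^ e ⟨0, by omega⟩ :=
      Fintype.prod_eq_single _ fun i hi ↦ absurd (Fin.ext (by omega)) hi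
    rw [he, hζ, mul_comm]
    simp only [hprod]
  obtain ⟨e, η, he⟩ := hf ε
  obtain ⟨n, θ, hn⟩ := hf u
  have he3 : ¬ (3 : ℤ) ∣ e := by
    rintro ⟨j, rfl⟩
    exact hε (f ^ j * η) (by rw [he, mul_pow, mul_comm 3 j, zpow_mul]; rfl)
  obtain ⟨j, hj⟩ : (3 : ℤ) ∣ 1 - e ^ 2 := by
    have : e % 3 = 1 ∨ e % 3 = 2 := by omega
    rw [Int.dvd_iff_emod_eq_zero]
    rcases this with h | h <;> simp [Int.sub_emod, pow_two, Int.mul_emod, h]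
  refine ⟨n * e, f ^ (n * j) * η ^ (-(n * e)) * θ, ?_⟩
  have hnn : n = e * (n * e) + (n * j) * 3 := by linear_combination n * hj
  rw [hn, he]
  nth_rewrite 1 [hnn]
  rw [zpow_add, mul_zpow, mul_pow, mul_pow, zpow_mul f e, zpow_mul f (n * j) 3, zpow_neg]
  have h3 : (η ^ 3) ^ (n * e) = (η ^ (n * e)) ^ 3 := by
    rw [← zpow_natCast, ← zpow_natCast, ← zpow_mul, ← zpow_mul, mul_comm]
  rw [h3, inv_pow]
  have h4 : (f ^ (n * j)) ^ (3 : ℤ) = (f ^ (n * j)) ^ 3 := zpow_natCast _ 3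
  rw [h4]
  calc (f ^ e) ^ (n * e) * (f ^ (n * j)) ^ 3 * θ ^ 3
    _ = (f ^ e) ^ (n * e) * ((η ^ (n * e)) ^ 3 * ((η ^ (n * e)) ^ 3)⁻¹) * (f ^ (n * j)) ^ 3 *
        θ ^ 3 := by
      rw [mul_inv_cancel, mul_one]
    _ = _ := by simp only [mul_assoc, mul_left_comm, mul_comm]

/-- A commutative group generated by two independent elements of order `3`. -/
theorem nonempty_mulEquiv_of_generators {C : Type*} [CommGroup C] {a b : C} (ha : a ^ 3 = 1)
    (hb : b ^ 3 = 1) (htop : Subgroup.closure {a, b} = ⊤)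
    (hind : ∀ i j : ℕ, a ^ i * b ^ j = 1 → 3 ∣ i ∧ 3 ∣ j) :
    Nonempty (C ≃* Multiplicative (ZMod 3 × ZMod 3)) := by
  have hz (x : C) (hx : x ^ 3 = 1) :
      zmultiplesHom (Additive C) (Additive.ofMul x) (3 : ℕ) = 0 := by
    rw [zmultiplesHom_apply, natCast_zsmul, ← ofMul_pow, hx, ofMul_one]
  let f : ZMod 3 × ZMod 3 →+ Additive C :=
    AddMonoidHom.coprod (ZMod.lift 3 ⟨_, hz a ha⟩) (ZMod.lift 3 ⟨_, hz b hb⟩)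
  have hf (i j : ℕ) : f (i, j) = Additive.ofMul (a ^ i * b ^ j) := by
    have h (x : C) (hx) (i : ℕ) :
        ZMod.lift 3 ⟨_, hz x hx⟩ (i : ZMod 3) = Additive.ofMul (x ^ i) := by
      have := ZMod.lift_coe 3 ⟨_, hz x hx⟩ i
      simpa using this
    rw [AddMonoidHom.coprod_apply, h a ha, h b hb, ofMul_mul]
  have hinj : Function.Injective f := by
    rw [injective_iff_map_eq_zero]
    rintro ⟨i, j⟩ hij
    rw [← ZMod.natCast_zmod_val i, ← ZMod.natCast_zmod_val j, hf, ofMul_eq_zero] at hij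
    obtain ⟨hi, hj⟩ := hind _ _ hij
    rw [← ZMod.natCast_eq_zero_iff, ZMod.natCast_zmod_val] at hi hj
    rw [hi, hj, Prod.mk_zero_zero]
  have hsurj : Function.Surjective (AddMonoidHom.toMultiplicativeLeft f) := by
    rw [← MonoidHom.range_eq_top, eq_top_iff, ← htop, Subgroup.closure_le]
    rintro x (rfl | rfl)
    · refine ⟨Multiplicative.ofAdd ((1 : ℕ), (0 : ℕ)), ?_⟩
      change (f _).toMul = _
      rw [toAdd_ofAdd, hf]; simp
    · refine ⟨Multiplicative.ofAdd ((0 : ℕ), (1 : ℕ)), ?_⟩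
      change (f _).toMul = _
      rw [toAdd_ofAdd, hf]; simp
  have hinj' : Function.Injective (AddMonoidHom.toMultiplicativeLeft f) := hinj
  exact ⟨(MulEquiv.ofBijective _ ⟨hinj', hsurj⟩).symm⟩

theorem nonempty_sylow_mulEquiv {C : Type*} [CommGroup C]
    (e : C ≃* Multiplicative (ZMod 3 × ZMod 3)) (P : Sylow 3 C) :
    Nonempty (↥(P : Subgroup C) ≃* Multiplicative (ZMod 3 × ZMod 3)) := by
  have hp : IsPGroup 3 (⊤ : Subgroup C) := by
    rintro ⟨g, _⟩
    refine ⟨1, Subtype.ext (e.injective ?_)⟩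
    simp only [Subgroup.coe_pow, pow_one, map_pow, Subgroup.coe_one, map_one]
    generalize e g = x
    revert x
    decide
  have htop : (⊤ : Subgroup C) = P := P.is_maximal' hp le_top
  exact ⟨((MulEquiv.subgroupCongr htop.symm).trans Subgroup.topEquiv).trans e⟩

theorem span_pair_pow_three_eq_span {R : Type*} [CommRing R] {p t γ : R} (A B C D : R)
    (h0 : γ ∣ p ^ 3) (h1 : γ ∣ p ^ 2 * t) (h2 : γ ∣ p * t ^ 2) (h3 : γ ∣ t ^ 3)
    (h : γ = A * p ^ 3 + B * (p ^ 2 * t) + C * (p * t ^ 2) + D * t ^ 3) :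
    Ideal.span {p, t} ^ 3 = Ideal.span {γ} := by
  apply le_antisymm
  · rw [pow_succ, pow_two, Ideal.span_mul_span', Ideal.span_mul_span', Ideal.span_le]
    rintro _ ⟨_, ⟨x, hx, y, hy, rfl⟩, z, hz, rfl⟩
    rcases hx with rfl | rfl <;> rcases hy with rfl | rfl <;> rcases hz with rfl | rfl <;>
      rw [SetLike.mem_coe, Ideal.mem_span_singleton] <;>
      first
      | (convert h0 using 1; ring1)
      | (convert h1 using 1; ring1)
      | (convert h2 using 1; ring1)
      | (convert h3 using 1; ring1)
  · rw [Ideal.span_singleton_le_iff_mem, h]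
    have hp : p ∈ Ideal.span {p, t} := Ideal.subset_span (Set.mem_insert _ _)
    have ht : t ∈ Ideal.span {p, t} := Ideal.subset_span (Set.mem_insert_of_mem _ rfl)
    have hmem {x y z : R} (hx : x ∈ Ideal.span {p, t}) (hy : y ∈ Ideal.span {p, t})
        (hz : z ∈ Ideal.span {p, t}) : x * y * z ∈ Ideal.span {p, t} ^ 3 := by
      rw [pow_succ, pow_two]
      exact Ideal.mul_mem_mul (Ideal.mul_mem_mul hx hy) hz
    rw [show p ^ 3 = p * p * p by ring, show p ^ 2 * t = p * p * t by ring,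
      show p * t ^ 2 = p * t * t by ring, show t ^ 3 = t * t * t by ring]
    exact add_mem (add_mem (add_mem (Ideal.mul_mem_left _ _ (hmem hp hp hp))
      (Ideal.mul_mem_left _ _ (hmem hp hp ht))) (Ideal.mul_mem_left _ _ (hmem hp ht ht)))
      (Ideal.mul_mem_left _ _ (hmem ht ht ht))

theorem span_pair_mul_span_pair_eq_span {R : Type*} [CommRing R] {p t t' : R} (A B : R)
    (h0 : p ∣ t * t') (h : A * p + B * (t + t') = 1) :
    Ideal.span {p, t} * Ideal.span {p, t'} = Ideal.span {p} := by
  apply le_antisymm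
  · rw [Ideal.span_mul_span', Ideal.span_le]
    rintro _ ⟨x, hx, y, hy, rfl⟩
    rcases hx with rfl | rfl <;> rcases hy with rfl | rfl <;>
      rw [SetLike.mem_coe, Ideal.mem_span_singleton]
    exacts [dvd_mul_right _ _, dvd_mul_right _ _, dvd_mul_left _ _, h0]
  · rw [Ideal.span_singleton_le_iff_mem]
    have hpeq : A * (p * p) + B * (p * t' + t * p) = p := by linear_combination p * h
    have hp (s : R) : p ∈ Ideal.span {p, s} := Ideal.subset_span (Set.mem_insert _ _)
    have ht (s : R) : s ∈ Ideal.span {p, s} := Ideal.subset_span (Set.mem_insert_of_mem _ rfl)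
    have hmem := add_mem (Ideal.mul_mem_left _ A (Ideal.mul_mem_mul (hp t) (hp t')))
      (Ideal.mul_mem_left _ B (add_mem (Ideal.mul_mem_mul (hp t) (ht t'))
        (Ideal.mul_mem_mul (ht t) (hp t'))))
    rwa [hpeq] at hmem

theorem PrimesOverMem.of_cube_eq_span {R : Type*} [CommRing R] [IsDedekindDomain R]
    [Module.Free ℤ R] [Module.Finite ℤ R] {H : Subgroup (ClassGroup R)} (hR : finrank ℤ R = 2)
    {p : ℕ} (hp : p.Prime) (P Q : (Ideal R)⁰) (hPQ : (P * Q : Ideal R) = Ideal.span {(p : R)})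
    {γ : R} (hγ : (P : Ideal R) ^ 3 = Ideal.span {γ}) (hN : (Algebra.norm ℤ γ).natAbs = p ^ 3)
    (hH : ClassGroup.mk0 P ∈ H) : PrimesOverMem H p := by
  have hP : Ideal.absNorm (P : Ideal R) = p := by
    have : Ideal.absNorm (P : Ideal R) ^ 3 = p ^ 3 := by
      rw [← map_pow, hγ, Ideal.absNorm_span_singleton, hN]
    exact Nat.pow_left_injective (by decide) this
  have hQ : Ideal.absNorm (Q : Ideal R) = p := by
    have : p * Ideal.absNorm (Q : Ideal R) = p * p := by
      rw [← hP, ← map_mul, hPQ, Ideal.absNorm_span_singleton,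
        show (p : R) = algebraMap ℤ R p by simp, Algebra.norm_algebraMap, hR, Int.natAbs_pow,
        Int.natAbs_natCast, hP, sq]
    exact Nat.eq_of_mul_eq_mul_left hp.pos this
  have hmax (I : (Ideal R)⁰) (hI : Ideal.absNorm (I : Ideal R) = p) :
      (I : Ideal R).IsMaximal := by
    refine Ideal.IsPrime.isMaximal ?_ (nonZeroDivisors.coe_ne_zero I)
    refine Ideal.isPrime_of_irreducible_absNorm ?_
    rw [hI]
    exact hp.prime.irreducible
  exact .of_mul_eq_span P Q (hmax P hP) (hmax Q hQ) hPQ hH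

theorem map_units_zpow_pow_eq_one {R S : Type*} [CommRing R] [CommRing S] (f : R →+* S) {ε : Rˣ}
    {n : ℕ} (hf : f ε ^ n = 1) (k : ℤ) : f ((ε ^ k : Rˣ) : R) ^ n = 1 := by
  have h : Units.map (f : R →* S) ε ^ n = 1 := Units.ext (by simpa using hf)
  have h' : Units.map (f : R →* S) (ε ^ k) ^ n = 1 := by
    rw [map_zpow, ← zpow_natCast, ← zpow_mul, mul_comm, zpow_mul, zpow_natCast, h, one_zpow]
  exact congrArg Units.val h'

theorem span_pair_mem_nonZeroDivisors {R : Type*} [CommRing R] [IsDomain R] {n : R} (hn : n ≠ 0)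
    (t : R) : Ideal.span {n, t} ∈ (Ideal R)⁰ :=
  mem_nonZeroDivisors_of_ne_zero fun h ↦
    hn (by simpa [h] using Ideal.subset_span (Set.mem_insert n {t}))

/-- A cubic residue obstruction to `x ^ i * y` being a cube times a unit. -/
theorem three_dvd_of_cubic_residue {R : Type*} [CommRing R] {ℓ n : ℕ} (hℓ : ℓ.Prime)
    (hn : ℓ - 1 = 3 * n) (φ : R →+* ZMod ℓ) {x y u β : R} {i : ℕ} (h : x ^ i * y = u * β ^ 3)
    (hy : φ y ^ n = 1) (hu : φ u ^ n = 1) (hx0 : φ x ≠ 0) (hx : φ x ^ n ≠ 1) : 3 ∣ i := by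
  have := Fact.mk hℓ
  have hn0 : n ≠ 0 := by
    rintro rfl
    exact hx (pow_zero _)
  have h1 : φ x ^ i * φ y = φ u * φ β ^ 3 := by simpa using congrArg φ h
  have hβ : φ β ≠ 0 := by
    intro h0
    rw [h0, zero_pow (by decide), mul_zero] at h1
    rcases mul_eq_zero.1 h1 with h2 | h2
    · exact pow_ne_zero i hx0 h2
    · rw [h2, zero_pow hn0] at hy
      exact zero_ne_one hy
  have h2 : (φ x ^ n) ^ i = 1 := by
    have := congrArg (· ^ n) h1
    simp only [mul_pow, hy, hu, mul_one, one_mul] at this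
    rw [← pow_mul, mul_comm, pow_mul, this, ← pow_mul, ← hn, ZMod.pow_card_sub_one_eq_one hβ]
  have h3 : (φ x ^ n) ^ 3 = 1 := by
    rw [← pow_mul, mul_comm, ← hn, ZMod.pow_card_sub_one_eq_one hx0]
  have : Fact (Nat.Prime 3) := ⟨Nat.prime_three⟩
  rw [← orderOf_eq_prime h3 hx]
  exact orderOf_dvd_of_pow_eq_one h2

/-- A relation between the classes of ideals with principal cubes gives a relation between the
generators of the cubes, up to units and cubes. -/
theorem exists_pow_mul_pow_eq_of_mk0 {R : Type*} [CommRing R] [IsDedekindDomain R]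
    {P Q : (Ideal R)⁰} {γ δ : R} (hP : (P : Ideal R) ^ 3 = Ideal.span {γ})
    (hQ : (Q : Ideal R) ^ 3 = Ideal.span {δ}) {i j : ℕ}
    (h : ClassGroup.mk0 P ^ i * ClassGroup.mk0 Q ^ j = 1) :
    ∃ (u : Rˣ) (β : R), γ ^ i * δ ^ j = u * β ^ 3 := by
  rw [← map_pow, ← map_pow, ← map_mul, ClassGroup.mk0_eq_one_iff] at h
  obtain ⟨β, hβ⟩ := h
  have h1 : Ideal.span {γ ^ i * δ ^ j} = Ideal.span {β ^ 3} := by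
    rw [← Ideal.span_singleton_pow, show Ideal.span {β} =
      (P : Ideal R) ^ i * (Q : Ideal R) ^ j from (by simpa using hβ.symm), mul_pow,
      ← pow_mul, ← pow_mul, mul_comm i, mul_comm j, pow_mul,
      pow_mul, hP, hQ, Ideal.span_singleton_pow, Ideal.span_singleton_pow,
      Ideal.span_singleton_mul_span_singleton]
  obtain ⟨u, hu⟩ := (Ideal.span_singleton_eq_span_singleton.1 h1).symm
  exact ⟨u, β, by rw [← hu, mul_comm]⟩

theorem mk0_pow_three_eq_one {R : Type*} [CommRing R] [IsDedekindDomain R]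
    {P : (Ideal R)⁰} {γ : R} (hP : (P : Ideal R) ^ 3 = Ideal.span {γ}) :
    ClassGroup.mk0 P ^ 3 = 1 := by
  rw [← map_pow, ClassGroup.mk0_eq_one_iff]
  exact ⟨γ, by simpa using hP⟩

section

variable {R : Type*} [CommRing R] (b : Basis (Fin 2) ℤ R) (c : ℤ)

theorem norm_add_mul_omega (h0 : b 0 = 1) (h1 : b 1 ^ 2 = b 1 + algebraMap ℤ R c) (x y : ℤ) :
    Algebra.norm ℤ ((x : R) + y * b 1) = x ^ 2 + x * y - c * y ^ 2 := by
  have h : (x : R) + y * b 1 = x • b 0 + y • b 1 := by simp [h0]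
  rw [norm_of_basis_one_omega b c h0 h1, h]
  simp only [map_add, map_smul, Basis.repr_self]
  simp

/-- A prime dividing the norm of `x + ω` exactly once, all other prime factors being known. -/
theorem PrimesOverMem.of_norm_add_omega [IsDedekindDomain R] [Module.Free ℤ R] [Module.Finite ℤ R]
    {H : Subgroup (ClassGroup R)} (h0 : b 0 = 1) (h1 : b 1 ^ 2 = b 1 + algebraMap ℤ R c)
    {p m : ℕ} (x : ℤ) (hp : p.Prime) (hpm : ¬ p ∣ m)
    (hx : (x ^ 2 + x - c).natAbs = p * m) (hm : ∀ q ∈ m.primeFactors, PrimesOverMem H q) :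
    PrimesOverMem H p := by
  refine .of_norm_eq (by rw [finrank_eq_card_basis b, Fintype.card_fin]) hp hpm hm
    (β := (x : R) + (1 : ℤ) * b 1) (β' := ((x + 1 : ℤ) : R) + (-1 : ℤ) * b 1) ?_ ?_ ?_
  · have : ((x : R) + (1 : ℤ) * b 1) * (((x + 1 : ℤ) : R) + (-1 : ℤ) * b 1) =
        ((x ^ 2 + x - c : ℤ) : R) := by
      simp only [algebraMap_int_eq, eq_intCast] at h1
      push_cast
      linear_combination -h1
    rw [this, ← Int.cast_natCast]
    exact Int.cast_dvd_cast _ _ (by rw [Int.natCast_dvd, hx]; exact dvd_mul_right p m)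
  · rw [norm_add_mul_omega b c h0 h1, ← hx]
    congr 1
    ring
  · rw [norm_add_mul_omega b c h0 h1, ← hx]
    congr 1
    ring

end

section

variable {R : Type*} [CommRing R] {ω : R}

theorem span_two_pow_three (hω : ω ^ 2 = ω + 8002) :
    Ideal.span {2, ω + 1} ^ 3 = Ideal.span {89 + ω} := by
  refine span_pair_pow_three_eq_span 13011 6010 (-2) (-3) ⟨90 - ω, ?_⟩ ⟨-3956 + 44 * ω, ?_⟩
    ⟨174066 - 1934 * ω, ?_⟩ ⟨-7650901 + 85099 * ω, ?_⟩ ?_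
  · linear_combination hω
  · linear_combination (-44) * hω
  · linear_combination 1936 * hω
  · linear_combination (ω - 85095) * hω
  · linear_combination (3 * ω + 16) * hω

theorem span_five_pow_three (hω : ω ^ 2 = ω + 8002) :
    Ideal.span {5, ω + 3} ^ 3 = Ideal.span {21883 + 246 * ω} := by
  refine span_pair_pow_three_eq_span 297 330 1 (-1) ⟨-22129 + 246 * ω, ?_⟩
    ⟨380421 - 4229 * ω, ?_⟩ ⟨-6539839 + 72701 * ω, ?_⟩ ⟨112426777 - 1249807 * ω, ?_⟩ ?_
  · linear_combination (-60516) * hω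
  · linear_combination 1040334 * hω
  · linear_combination (-17884441) * hω
  · linear_combination (ω + 307452532) * hω
  · linear_combination (ω + 5) * hω

end

section

variable {K : Type*} [Field K] [NumberField K] (b : Basis (Fin 2) ℤ (𝓞 K))
  {P₂ P₅ : (Ideal (𝓞 K))⁰}

/-- The class group of `ℚ(√32009)` is generated by the classes of a prime above `2` and a prime
above `5`. -/
theorem closure_mk0_two_five_eq_top (hdeg : finrank ℚ K = 2) (h0 : b 0 = 1)
    (h1 : b 1 ^ 2 = b 1 + algebraMap ℤ (𝓞 K) 8002)
    (hP₂ : (P₂ : Ideal (𝓞 K)) = Ideal.span {2, b 1 + 1})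
    (hP₅ : (P₅ : Ideal (𝓞 K)) = Ideal.span {5, b 1 + 3}) :
    Subgroup.closure {ClassGroup.mk0 P₂, ClassGroup.mk0 P₅} = ⊤ := by
  have hdiscr : discr K = 32009 := discr_of_basis_one_omega b _ h0 h1
  have hR : finrank ℤ (𝓞 K) = 2 := by rw [finrank_eq_card_basis b, Fintype.card_fin]
  have hnorm := norm_add_mul_omega b _ h0 h1
  set H := Subgroup.closure {ClassGroup.mk0 P₂, ClassGroup.mk0 P₅}
  have hsplit {p m : ℕ} := PrimesOverMem.of_norm_add_omega (H := H) (p := p) (m := m) b _ h0 h1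
  set ω : 𝓞 K := b 1
  have hω : ω ^ 2 = ω + 8002 := by simpa using h1
  have hmem₂ : PrimesOverMem H 2 := by
    refine .of_cube_eq_span hR Nat.prime_two P₂
      ⟨_, span_pair_mem_nonZeroDivisors two_ne_zero (2 - ω)⟩ ?_
      (by rw [hP₂, span_two_pow_three hω]) ?_ (Subgroup.subset_closure (Set.mem_insert _ _))
    · rw [hP₂]
      exact span_pair_mul_span_pair_eq_span (-1) 1 ⟨-4000, by linear_combination -hω⟩
        (by ring)
    · have := hnorm 89 1
      push_cast at this
      rw [one_mul] at this
      rw [this]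
      rfl
  have hmem₅ : PrimesOverMem H 5 := by
    refine .of_cube_eq_span hR Nat.prime_five P₅
      ⟨_, span_pair_mem_nonZeroDivisors (OfNat.ofNat_ne_zero 5) (4 - ω)⟩ ?_
      (by rw [hP₅, span_five_pow_three hω]) ?_
      (Subgroup.subset_closure (Set.mem_insert_of_mem _ rfl))
    · rw [hP₅]
      exact span_pair_mul_span_pair_eq_span 3 (-2) ⟨-1598, by linear_combination -hω⟩
        (by ring)
    · have := hnorm 21883 246
      push_cast at this
      rw [this]
      rfl
  have hinert {p : ℕ} (hp : p.Prime) (h : ∀ r : ZMod p, r ^ 2 ≠ r + 8002) :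
      PrimesOverMem H p :=
    .of_inert hR hp (c := 8002) (ω := ω) (by simpa using h1) (by simpa using h)
  have hmul {m n : ℕ} (hm : ∀ q ∈ m.primeFactors, PrimesOverMem H q)
      (hn : ∀ q ∈ n.primeFactors, PrimesOverMem H q) :
      ∀ q ∈ (m * n).primeFactors, PrimesOverMem H q := by
    intro q hq
    have hq' := Nat.prime_of_mem_primeFactors hq
    have hmn := Nat.mem_primeFactors.1 hq
    rcases hq'.dvd_mul.1 hmn.2.1 with h | h
    · exact hm q (Nat.mem_primeFactors.2 ⟨hq', h, left_ne_zero_of_mul hmn.2.2⟩)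
    · exact hn q (Nat.mem_primeFactors.2 ⟨hq', h, right_ne_zero_of_mul hmn.2.2⟩)
  have hpow {p : ℕ} (hp : p.Prime) (h : PrimesOverMem H p) (k : ℕ) :
      ∀ q ∈ (p ^ k).primeFactors, PrimesOverMem H q := by
    intro q hq
    rwa [(Nat.prime_dvd_prime_iff_eq (Nat.prime_of_mem_primeFactors hq) hp).1
      ((Nat.prime_of_mem_primeFactors hq).dvd_of_dvd_pow (Nat.dvd_of_mem_primeFactors hq))]
  have htwo := hpow Nat.prime_two hmem₂
  have hfive := hpow Nat.prime_five hmem₅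
  have hmem₁₃ : PrimesOverMem H 13 :=
    hsplit (-87) (by norm_num) (by norm_num) (by norm_num) (hmul (htwo 3) (hfive 1))
  have hthirteen := hpow (by norm_num) hmem₁₃
  have hmem₁₇ : PrimesOverMem H 17 :=
    hsplit (-89) (by norm_num) (by norm_num) (by norm_num) (hmul (htwo 1) (hfive 1))
  have hmem₂₃ : PrimesOverMem H 23 :=
    hsplit (-83) (by norm_num) (by norm_num) (by norm_num) (hmul (htwo 2) (hthirteen 1))
  have hmem₂₉ : PrimesOverMem H 29 :=
    hsplit (-95) (by norm_num) (by norm_num) (by norm_num) (htwo 5)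
  have hmem₃₇ : PrimesOverMem H 37 :=
    hsplit (-92) (by norm_num) (by norm_num) (by norm_num) (hmul (htwo 1) (hfive 1))
  have hmem₄₃ : PrimesOverMem H 43 :=
    hsplit (-96) (by norm_num) (by norm_num) (by norm_num) (hmul (htwo 1) (hthirteen 1))
  have hmem₄₇ : PrimesOverMem H 47 :=
    hsplit (-91) (by norm_num) (by norm_num) (by norm_num) (htwo 2)
  have hmem₆₁ : PrimesOverMem H 61 :=
    hsplit (-70) (by norm_num) (by norm_num) (by norm_num) (hmul (htwo 2) (hthirteen 1))
  have hmem₇₃ : PrimesOverMem H 73 :=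
    hsplit (-100) (by norm_num) (by norm_num) (by norm_num) (hmul (htwo 1) (hthirteen 1))
  refine eq_top_of_primesOverMem hdeg (n := 89) (by rw [hdiscr]; norm_num)
    (by rw [hdiscr]; norm_num) fun p hp hle ↦ ?_
  interval_cases p <;>
    first
    | assumption
    | (norm_num at hp; done)
    | exact hinert hp (by decide)

set_option maxRecDepth 4000 in
/-- The classes of a prime above `2` and a prime above `5` in `ℚ(√32009)` are independent
elements of order `3`. -/
theorem three_dvd_of_mk0_two_five (hdeg : finrank ℚ K = 2) (h0 : b 0 = 1)
    (h1 : b 1 ^ 2 = b 1 + algebraMap ℤ (𝓞 K) 8002)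
    (hP₂ : (P₂ : Ideal (𝓞 K)) ^ 3 = Ideal.span {89 + b 1})
    (hP₅ : (P₅ : Ideal (𝓞 K)) ^ 3 = Ideal.span {21883 + 246 * b 1}) (i j : ℕ)
    (hij : ClassGroup.mk0 P₂ ^ i * ClassGroup.mk0 P₅ ^ j = 1) : 3 ∣ i ∧ 3 ∣ j := by
  have hpos : 0 < discr K := by rw [discr_of_basis_one_omega b _ h0 h1]; norm_num
  obtain ⟨φ, hφ⟩ := exists_ringHom_of_basis_one_omega b _ h0 h1 (20 : ZMod 103) (by decide)
  obtain ⟨ψ, hψ⟩ := exists_ringHom_of_basis_one_omega b _ h0 h1 (7 : ZMod 199) (by decide)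
  obtain ⟨χ, hχ⟩ := exists_ringHom_of_basis_one_omega b _ h0 h1 (5 : ZMod 307) (by decide)
  set ω : 𝓞 K := b 1
  have hω : ω ^ 2 = ω + 8002 := by simpa using h1
  have hε : (18917767 + 212666 * ω) * (-19130433 + 212666 * ω) = 1 := by
    linear_combination 212666 ^ 2 * hω
  let ε : (𝓞 K)ˣ := ⟨_, _, hε, by rw [mul_comm, hε]⟩
  have hlin {ℓ : ℕ} (f : 𝓞 K →+* ZMod ℓ) (x y : ℕ) [x.AtLeastTwo] [y.AtLeastTwo] :
      f (OfNat.ofNat x + OfNat.ofNat y * ω) = OfNat.ofNat x + OfNat.ofNat y * f ω := by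
    rw [map_add, map_mul, map_ofNat, map_ofNat]
  have hφε : φ ε = 18917767 + 212666 * 20 := by rw [← hφ]; exact hlin φ _ _
  have hψε : ψ ε = 18917767 + 212666 * 7 := by rw [← hψ]; exact hlin ψ _ _
  have hχε : χ ε = 18917767 + 212666 * 5 := by rw [← hχ]; exact hlin χ _ _
  have hφ₂ : φ (89 + ω) = 89 + 20 := by rw [map_add, hφ, map_ofNat]
  have hχ₂ : χ (89 + ω) = 89 + 5 := by rw [map_add, hχ, map_ofNat]
  have hφ₅ : φ (21883 + 246 * ω) = 21883 + 246 * 20 := by rw [hlin, hφ]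
  have hχ₅ : χ (21883 + 246 * ω) = 21883 + 246 * 5 := by rw [hlin, hχ]
  have hcube (η : (𝓞 K)ˣ) : ε ≠ η ^ 3 := by
    intro h
    have h3 : 3 ∣ 1 := three_dvd_of_cubic_residue (ℓ := 199) (n := 66) (by norm_num) rfl ψ
      (x := ε) (y := 1) (u := 1) (β := η) (by rw [h]; simp) (by rw [map_one, one_pow])
      (by rw [map_one, one_pow]) (by rw [hψε]; decide) (by rw [hψε]; decide)
    exact absurd h3 (by decide)
  obtain ⟨u, β, hβ⟩ := exists_pow_mul_pow_eq_of_mk0 hP₂ hP₅ hij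
  obtain ⟨k, η, hu⟩ := exists_unit_eq_zpow_mul_cube hdeg hpos hcube u
  have hrel : (89 + ω) ^ i * (21883 + 246 * ω) ^ j = ((ε ^ k : (𝓞 K)ˣ) : 𝓞 K) * (η * β) ^ 3 := by
    rw [hβ, hu, Units.val_mul, Units.val_pow_eq_pow_val]
    ring
  have hi : 3 ∣ i := by
    refine three_dvd_of_cubic_residue (n := 34) (by norm_num) rfl φ hrel ?_
      (map_units_zpow_pow_eq_one φ (by rw [hφε]; decide) k) (by rw [hφ₂]; decide)
      (by rw [hφ₂]; decide)
    have h : (21883 + 246 * 20 : ZMod 103) ^ 34 = 1 := by decide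
    rw [map_pow, hφ₅, pow_right_comm, h, one_pow]
  refine ⟨hi, ?_⟩
  obtain ⟨l, rfl⟩ := hi
  refine three_dvd_of_cubic_residue (n := 102) (by norm_num) rfl χ ((mul_comm _ _).trans hrel) ?_
    (map_units_zpow_pow_eq_one χ (by rw [hχε]; decide) k) (by rw [hχ₅]; decide)
    (by rw [hχ₅]; decide)
  have h : ((89 + 5 : ZMod 307) ^ 3) ^ 102 = 1 := by decide
  rw [map_pow, hχ₂, pow_mul, pow_right_comm, h, one_pow]

end

theorem three_class_group_of_Q_sqrt_32009 (K : Type*) [Field K]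
    [NumberField K] (hdeg : Module.finrank ℚ K = 2)
    (α : K) (hα : α ^ 2 = 32009)
    (P : Sylow 3 (ClassGroup (𝓞 K))) :
    Nonempty (↥(P : Subgroup (ClassGroup (𝓞 K))) ≃*
      Multiplicative (ZMod 3 × ZMod 3)) := by
  have hprime : Prime (32009 : ℤ) := Nat.prime_iff_prime_int.1 (by norm_num : Nat.Prime 32009)
  obtain ⟨b, h0, h1⟩ := exists_integral_basis_one_omega hdeg (c := 8002)
    (by simpa using hprime.squarefree) (by simpa using hprime.not_isSquare) α
    (by rw [hα]; norm_num)
  have hω : b 1 ^ 2 = b 1 + 8002 := by simpa using h1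
  let P₂ : (Ideal (𝓞 K))⁰ := ⟨_, span_pair_mem_nonZeroDivisors two_ne_zero (b 1 + 1)⟩
  let P₅ : (Ideal (𝓞 K))⁰ := ⟨_, span_pair_mem_nonZeroDivisors (OfNat.ofNat_ne_zero 5) (b 1 + 3)⟩
  have hP₂ : (P₂ : Ideal (𝓞 K)) ^ 3 = _ := span_two_pow_three hω
  have hP₅ : (P₅ : Ideal (𝓞 K)) ^ 3 = _ := span_five_pow_three hω
  obtain ⟨e⟩ := nonempty_mulEquiv_of_generators (mk0_pow_three_eq_one hP₂)
    (mk0_pow_three_eq_one hP₅) (closure_mk0_two_five_eq_top b hdeg h0 h1 rfl rfl)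
    (three_dvd_of_mk0_two_five b hdeg h0 h1 hP₂ hP₅)
  exact nonempty_sylow_mulEquiv e P
end
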